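/- arXiv:2110.13197 — 4 statements merged into one kernel-verified Lean document; each statement's English description precedes it below -/
import Mathlib

section
/- Fix a constant 0 < ε < 1. For every δ > 0 there exists N such that for all integers n ≥ N and all integers r with 3 ≤ r < (2 log n)^{1/2} and rn even, the following holds: if G₁ and G₂ are drawn independently and uniformly at random from the set of r-regular simple graphs on the vertex set {1,…,n}, then for any fixed vertices v₁ of G₁ and v₂ of G₂, with probability at least 1 − δ/n, for every integer i with (1/2)·log n / log(r−1−ε) < i < (2/3 − ε)·log n / log(r−1) and for each j ∈ {1,2}, the number of edges of G_j with one endpoint in Q_{v_j,G_j}^i and the other endpoint in Q_{v_j,G_j}^{i+1} is at least (r − 1 − ε)·|Q_{v_j,G_j}^i|. -/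
/-- The type of 1-WL colors after `t` refinement rounds. -/
def WLColor : ℕ → Type
  | 0 => Unit
  | t + 1 => WLColor t × Multiset (WLColor t)

/-- The `t`-round 1-WL color of a vertex `v` in a finite simple graph `G`:
`c_0(v)` is a fixed constant, and `c_{t+1}(v) = (c_t(v), {{c_t(u) : u ∈ N(v)}})`. -/
noncomputable def wlColor {V : Type} [Finite V] (G : SimpleGraph V) : (t : ℕ) → V → WLColor t
  | 0, _ => ()
  | t + 1, v =>
    (wlColor G t v, ((Set.toFinite {u | G.Adj v u}).toFinset.val).map (wlColor G t))

/-- `ball G v h` is the set of vertices at shortest-path distance at most `h` from `v`. -/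
def ball {V : Type} (G : SimpleGraph V) (v : V) (h : ℕ) : Set V :=
  {u | G.Reachable v u ∧ G.dist v u ≤ h}

/-- `sphere G v k` is the set `Q_{v,G}^k` of vertices at shortest-path distance exactly `k`. -/
def sphere {V : Type} (G : SimpleGraph V) (v : V) (k : ℕ) : Set V :=
  {u | G.Reachable v u ∧ G.dist v u = k}

/-- A graph is `r`-regular if every vertex has exactly `r` neighbors. -/
def IsRegularGraph {V : Type} (G : SimpleGraph V) (r : ℕ) : Prop :=
  ∀ v : V, Nat.card {u : V // G.Adj v u} = r

lemma self_mem_ball {V : Type} (G : SimpleGraph V) (v : V) (h : ℕ) : v ∈ ball G v h :=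
  ⟨SimpleGraph.Reachable.refl v, by simp [SimpleGraph.dist_self]⟩

/-- The multiset of `t`-round WL colors of all vertices of `G`. -/
noncomputable def graphColorMultiset {V : Type} [Finite V] (G : SimpleGraph V) (t : ℕ) :
    Multiset (WLColor t) :=
  haveI := Fintype.ofFinite V
  Finset.univ.val.map (wlColor G t)

/-- The `(h,L)` subgraph-WL node representation of `w`: the multiset of `L`-round WL colors
of the vertices of the height-`h` rooted subgraph `B_G(w,h)`, computed within that subgraph. -/
noncomputable def subgraphWLNodeRep {V : Type} [Finite V] (G : SimpleGraph V) (h L : ℕ)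
    (w : V) : Multiset (WLColor L) :=
  graphColorMultiset (G.induce (ball G w h)) L

/-- The `(h,L)` subgraph-WL graph representation of `G`. -/
noncomputable def subgraphWLGraphRep {V : Type} [Finite V] (G : SimpleGraph V) (h L : ℕ) :
    Multiset (Multiset (WLColor L)) :=
  haveI := Fintype.ofFinite V
  Finset.univ.val.map (subgraphWLNodeRep G h L)

/-- `a_{v,G}^{i,k}`: the number of vertices in `Q_{v,G}^{k+1}` with exactly `i` neighbors in
`Q_{v,G}^k`.  The edge configuration `C_{v,G}^k` is the sequence `i ↦ a_{v,G}^{i,k}` (`i ≥ 1`). -/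
noncomputable def edgeConfig {V : Type} (G : SimpleGraph V) (v : V) (k i : ℕ) : ℕ :=
  Nat.card {u : V // u ∈ sphere G v (k + 1) ∧
    Nat.card {w : V // w ∈ sphere G v k ∧ G.Adj u w} = i}

/-- The number of edges of `G` with one endpoint in `Q_{v,G}^i` and the other in `Q_{v,G}^{i+1}`. -/
noncomputable def crossEdges {V : Type} (G : SimpleGraph V) (v : V) (i : ℕ) : ℕ :=
  Nat.card {p : V × V // p.1 ∈ sphere G v i ∧ p.2 ∈ sphere G v (i + 1) ∧ G.Adj p.1 p.2}

/-!
Explore a random `r`-regular graph from `v` one vertex at a time, in order of distance, and let the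
*excess* count the revealed edges that close a cycle. Given the neighbourhoods already revealed,
switching two edges shows that a set `A` of unexplored vertices is contained in the neighbourhood of
`w` with probability at most `(2 * r / n) ^ #A`, as if the edges were independent. Hence a
discounted exponential of the excess is a supermartingale, and Markov's inequality shows that, up to
probability `o(1 / n)`, the excess of the ball of radius `k` is below `max (3 / 2) (κ * s ^ k)` at
all relevant levels, where `s = r - 1` and `κ` is a small multiple of `ε / log n`.

Every layer edge that does not lead to a fresh vertex of the next layer is paid for by the excess.
A layer therefore keeps growing almost like `s ^ k`: one extra edge costs too little to slow it down
early on, and later the total loss is a small fraction of `s ^ k`. So its size dominates the excess,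
and all but a small proportion of the `s` outward edges per vertex reach the next layer.
-/

section

open Classical Finset

section Interedges

variable {V : Type*} (G : SimpleGraph V)

lemma card_interedges_union_left {A B : Finset V} (h : Disjoint A B) (C : Finset V) :
    #(G.interedges (A ∪ B) C) = #(G.interedges A C) + #(G.interedges B C) := by
  rw [← card_union_of_disjoint (G.interedges_disjoint_left h C)]
  congr 1
  grind [SimpleGraph.mem_interedges_iff]

lemma card_interedges_union_right (A : Finset V) {B C : Finset V} (h : Disjoint B C) :
    #(G.interedges A (B ∪ C)) = #(G.interedges A B) + #(G.interedges A C) := by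
  rw [← card_union_of_disjoint (G.interedges_disjoint_right A h)]
  congr 1
  grind [SimpleGraph.mem_interedges_iff]

lemma card_interedges_comm (A B : Finset V) : #(G.interedges A B) = #(G.interedges B A) :=
  haveI : Std.Symm G.Adj := G.symm
  Rel.card_interedges_comm A B

variable {G}

lemma interedges_eq_empty {A B : Finset V} (h : ∀ x ∈ A, ∀ y ∈ B, ¬ G.Adj x y) :
    G.interedges A B = ∅ := by
  grind [SimpleGraph.mem_interedges_iff]

lemma card_le_card_interedges {A B : Finset V} (h : ∀ x ∈ A, ∃ y ∈ B, G.Adj x y) :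
    #A ≤ #(G.interedges A B) :=
  card_le_card_of_surjOn Prod.fst fun x hx ↦ by
    obtain ⟨y, hy, hxy⟩ := h x hx
    exact ⟨(x, y), G.mk_mem_interedges_iff.2 ⟨hx, hy, hxy⟩, rfl⟩

variable [Fintype V]

variable (G) in
lemma card_interedges_singleton_left (w : V) (B : Finset V) :
    #(G.interedges {w} B) = #(G.neighborFinset w ∩ B) := by
  refine card_bij' (fun e _ ↦ e.2) (fun y _ ↦ (w, y)) ?_ ?_ ?_ ?_ <;>
    simp +contextual [SimpleGraph.mem_interedges_iff, Prod.ext_iff]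

lemma card_interedges_univ_right {r : ℕ} (hG : G.IsRegularOfDegree r) (A : Finset V) :
    #(G.interedges A univ) = r * #A := by
  induction A using Finset.induction_on with
  | empty => simp
  | insert w A hw ih =>
    rw [insert_eq, card_interedges_union_left _ (by simpa using hw), ih,
      card_interedges_singleton_left, inter_univ, G.card_neighborFinset_eq_degree, hG.degree_eq,
      card_union_of_disjoint (by simpa using hw), card_singleton, mul_add, mul_one]

end Interedges

section Exploration

variable {V : Type*} [Fintype V] {G H : SimpleGraph V} {v w : V} {S T : Finset V}

/-- The vertices known once the neighbourhoods of all vertices of `S` have been revealed in an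
exploration of `G` from `v`. -/
noncomputable def discovered (G : SimpleGraph V) (v : V) (S : Finset V) : Finset V :=
  {u | u = v ∨ u ∈ S ∨ ∃ x ∈ S, G.Adj x u}

/-- The excess of the exploration of `G` from `v` with revealed set `S`: the number of edges meeting
`S`, minus the number of discovered vertices other than `v`. When `S` is explored from `v` outwards
this counts the revealed edges that close a cycle. -/
noncomputable def excess (G : SimpleGraph V) (v : V) (S : Finset V) : ℝ :=
  #(G.interedges S univ) - #(G.interedges S S) / 2 - (#(discovered G v S) - 1)

lemma mem_discovered {u : V} : u ∈ discovered G v S ↔ u = v ∨ u ∈ S ∨ ∃ x ∈ S, G.Adj x u := by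
  simp [discovered]

lemma subset_discovered : S ⊆ discovered G v S := fun _ hu ↦ mem_discovered.2 (.inr (.inl hu))

lemma discovered_mono (h : S ⊆ T) : discovered G v S ⊆ discovered G v T := by
  grind [mem_discovered]

lemma card_frontier_le {r : ℕ} (hG : G.IsRegularOfDegree r) :
    #(discovered G v S \ S) ≤ r * #S + 1 := by
  have hsub : discovered G v S \ S ⊆ insert v ((G.interedges S univ).image Prod.snd) := by
    intro u hu
    simp only [mem_sdiff, mem_discovered, mem_insert, mem_image, SimpleGraph.mem_interedges_iff,
      mem_univ, true_and, Prod.exists, exists_eq_right] at hu ⊢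
    grind
  calc #(discovered G v S \ S) ≤ #((G.interedges S univ).image Prod.snd) + 1 :=
        (card_le_card hsub).trans (card_insert_le _ _)
    _ ≤ #(G.interedges S univ) + 1 := by gcongr; exact card_image_le
    _ = r * #S + 1 := by rw [card_interedges_univ_right hG]

lemma excess_empty : excess G v ∅ = 0 := by
  have hv : discovered G v ∅ = {v} := by ext; simp [mem_discovered]
  simp [excess, hv]

lemma excess_union (hST : Disjoint S T) :
    excess G v (S ∪ T) = excess G v S + #(G.interedges T Sᶜ) - #(G.interedges T T) / 2
      - #(discovered G v (S ∪ T) \ discovered G v S) := by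
  have hT : #(G.interedges T univ) = #(G.interedges T S) + #(G.interedges T Sᶜ) := by
    rw [← card_interedges_union_right G T disjoint_compl_right, union_compl]
  have hdisc := card_sdiff_add_card_eq_card
    (discovered_mono (G := G) (v := v) (subset_union_left (s₁ := S) (s₂ := T)))
  simp only [excess, card_interedges_union_left G hST, card_interedges_union_right G _ hST,
    card_interedges_comm G S T, hT, ← hdisc]
  push_cast
  ring

lemma excess_insert (hw : w ∈ discovered G v S \ S) :
    excess G v (insert w S) =
      excess G v S + #(G.neighborFinset w ∩ (discovered G v S \ S)) := by
  rw [mem_sdiff] at hw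
  have hnew : discovered G v (S ∪ {w}) \ discovered G v S =
      G.neighborFinset w \ discovered G v S := by
    ext u
    simp only [mem_sdiff, mem_discovered, SimpleGraph.mem_neighborFinset, mem_union, mem_singleton]
    grind [mem_discovered]
  have hsplit : #(G.neighborFinset w ∩ Sᶜ) =
      #(G.neighborFinset w ∩ (discovered G v S \ S)) +
        #(G.neighborFinset w \ discovered G v S) := by
    rw [← card_union_of_disjoint (by grind [disjoint_left])]
    congr 1
    grind [subset_discovered (G := G) (v := v) (S := S), mem_compl]
  have hloop : #(G.neighborFinset w ∩ {w}) = 0 := by simp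
  rw [insert_eq, union_comm, excess_union (by simpa using hw.2), hnew,
    card_interedges_singleton_left, card_interedges_singleton_left, hsplit, hloop]
  push_cast
  ring

lemma discovered_congr (h : Set.EqOn H.neighborSet G.neighborSet S) :
    discovered H v S = discovered G v S := by
  ext u
  simp only [mem_discovered]
  refine or_congr_right (or_congr_right (exists_congr fun x ↦ and_congr_right fun hx ↦ ?_))
  exact Set.ext_iff.1 (h hx) u

lemma excess_congr (h : Set.EqOn H.neighborSet G.neighborSet S) : excess H v S = excess G v S := by
  have hI (B : Finset V) : H.interedges S B = G.interedges S B := by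
    ext ⟨x, y⟩
    simp only [SimpleGraph.mk_mem_interedges_iff]
    exact and_congr_right fun hx ↦ and_congr_right fun _ ↦ Set.ext_iff.1 (h hx) y
  simp only [excess, hI, discovered_congr h]

end Exploration

section Switching

variable {V : Type*} {G : SimpleGraph V} {w a x y : V}

/-- The switching operation on graphs: the edges `wa` and `xy` are replaced by `wx` and `ay`. -/
def switch (G : SimpleGraph V) (w a x y : V) : SimpleGraph V :=
  G.deleteEdges {s(w, a), s(x, y)} ⊔ SimpleGraph.edge w x ⊔ SimpleGraph.edge a y

/-- The condition under which `switch G w a x y` preserves all degrees: `wa` and `xy` are edges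
while `wx` and `ay` are non-edges. It forces the four vertices to be distinct. -/
structure IsSwitchable (G : SimpleGraph V) (w a x y : V) : Prop where
  adj_left : G.Adj w a
  adj_right : G.Adj x y
  ne_left : w ≠ x
  not_adj_left : ¬ G.Adj w x
  ne_right : a ≠ y
  not_adj_right : ¬ G.Adj a y

lemma switch_rev : switch G w a x y = switch G a w y x := by
  simp only [switch, Sym2.eq_swap (a := a), Sym2.eq_swap (a := y), sup_right_comm]

lemma switch_swap : switch G w a x y = switch G x y w a := by
  simp only [switch, Set.pair_comm s(x, y), SimpleGraph.edge_comm w x, SimpleGraph.edge_comm a y]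

lemma switch_adj (hwx : w ≠ x) (hay : a ≠ y) {p q : V} :
    (switch G w a x y).Adj p q ↔ (G.Adj p q ∧ s(p, q) ≠ s(w, a) ∧ s(p, q) ≠ s(x, y)) ∨
      s(p, q) = s(w, x) ∨ s(p, q) = s(a, y) := by
  simp only [switch, SimpleGraph.sup_adj, SimpleGraph.deleteEdges_adj, SimpleGraph.edge_adj,
    Set.mem_insert_iff, Set.mem_singleton_iff, Sym2.eq_iff]
  grind

namespace IsSwitchable

variable (h : IsSwitchable G w a x y)
include h

lemma rev : IsSwitchable G a w y x :=
  ⟨h.adj_left.symm, h.adj_right.symm, h.ne_right, h.not_adj_right, h.ne_left, h.not_adj_left⟩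

lemma swap : IsSwitchable G x y w a :=
  ⟨h.adj_right, h.adj_left, h.ne_left.symm, h.not_adj_left ∘ .symm, h.ne_right.symm,
    h.not_adj_right ∘ .symm⟩

lemma neighborSet_switch_left :
    (switch G w a x y).neighborSet w = insert x (G.neighborSet w \ {a}) := by
  ext u
  have := h.adj_left.ne
  have := h.not_adj_right
  have := h.adj_left.symm
  simp only [SimpleGraph.mem_neighborSet, switch_adj h.ne_left h.ne_right, Sym2.eq_iff,
    Set.mem_insert_iff, Set.mem_sdiff, Set.mem_singleton_iff]
  grind [h.ne_left]

lemma neighborSet_switch_of_ne {u : V} (hw : u ≠ w) (ha : u ≠ a) (hx : u ≠ x) (hy : u ≠ y) :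
    (switch G w a x y).neighborSet u = G.neighborSet u := by
  ext
  simp [switch_adj h.ne_left h.ne_right, hw, ha, hx, hy]

lemma degree_switch_left [Fintype V] : (switch G w a x y).degree w = G.degree w := by
  have hN : (switch G w a x y).neighborFinset w = insert x ((G.neighborFinset w).erase a) := by
    ext u
    simpa [and_comm] using Set.ext_iff.1 h.neighborSet_switch_left u
  have ha : a ∈ G.neighborFinset w := (G.mem_neighborFinset ..).2 h.adj_left
  rw [← SimpleGraph.card_neighborFinset_eq_degree, hN,
    card_insert_of_notMem (by simp [h.not_adj_left]), card_erase_add_one ha,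
    SimpleGraph.card_neighborFinset_eq_degree]

lemma degree_switch [Fintype V] (u : V) : (switch G w a x y).degree u = G.degree u := by
  rcases eq_or_ne u w with rfl | hw
  · exact h.degree_switch_left
  rcases eq_or_ne u a with rfl | ha
  · rw [switch_rev, h.rev.degree_switch_left]
  rcases eq_or_ne u x with rfl | hx
  · rw [switch_swap, h.swap.degree_switch_left]
  rcases eq_or_ne u y with rfl | hy
  · rw [switch_swap, switch_rev, h.swap.rev.degree_switch_left]
  simp only [← SimpleGraph.card_neighborSet_eq_degree, h.neighborSet_switch_of_ne hw ha hx hy]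

lemma switch_switch : switch (switch G w a x y) w x a y = G := by
  ext p q
  have := h.not_adj_left
  have := h.not_adj_right
  have := h.adj_left
  have := h.adj_right
  have hne : x ≠ y := h.adj_right.ne
  simp only [switch_adj h.adj_left.ne hne, switch_adj h.ne_left h.ne_right, ne_eq, Sym2.eq_iff]
  grind [G.adj_comm]

end IsSwitchable

variable [Fintype V]

lemma card_interedges_compl_compl {r : ℕ} (hG : G.IsRegularOfDegree r) (A B : Finset V) :
    r * Fintype.card V ≤ #(G.interedges Aᶜ Bᶜ) + r * (#A + #B) := by
  have hA : r * Fintype.card V = r * #A + #(G.interedges Aᶜ univ) := by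
    rw [← card_univ, ← card_interedges_univ_right hG, ← card_interedges_univ_right hG,
      ← card_interedges_union_left G disjoint_compl_right, union_compl]
  have hB : #(G.interedges Aᶜ univ) = #(G.interedges Aᶜ B) + #(G.interedges Aᶜ Bᶜ) := by
    rw [← card_interedges_union_right G _ disjoint_compl_right, union_compl]
  have hle : #(G.interedges Aᶜ B) ≤ r * #B := by
    rw [card_interedges_comm, ← card_interedges_univ_right hG]
    exact card_le_card (G.interedges_mono Subset.rfl (subset_univ _))
  linarith

/-- The edges `(x, y)` of `G` with which `wa` can be switched without altering any neighbourhood of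
a vertex in `S`. -/
noncomputable def switchPartners (G : SimpleGraph V) (S : Finset V) (w a : V) : Finset (V × V) :=
  G.interedges (S ∪ insert w (G.neighborFinset w))ᶜ (S ∪ insert a (G.neighborFinset a))ᶜ

lemma le_two_mul_card_switchPartners {r : ℕ} (hG : G.IsRegularOfDegree r) {S : Finset V}
    (hS : 4 * (#S + 1 + r) ≤ Fintype.card V) (w a : V) :
    r * Fintype.card V ≤ 2 * #(switchPartners G S w a) := by
  have hcard (u : V) : #(S ∪ insert u (G.neighborFinset u)) ≤ #S + 1 + r := by
    have h₁ := card_union_le S (insert u (G.neighborFinset u))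
    have h₂ := card_insert_le u (G.neighborFinset u)
    rw [G.card_neighborFinset_eq_degree, hG.degree_eq] at h₂
    omega
  have hpartners := card_interedges_compl_compl hG
    (S ∪ insert w (G.neighborFinset w)) (S ∪ insert a (G.neighborFinset a))
  have hexcluded := Nat.mul_le_mul_left r (add_le_add (hcard w) (hcard a))
  have hhalf := Nat.mul_le_mul_left r hS
  rw [switchPartners]
  linarith

lemma isSwitchable_of_mem_switchPartners {S : Finset V} (hwa : G.Adj w a)
    (h : (x, y) ∈ switchPartners G S w a) : IsSwitchable G w a x y ∧ x ∉ S ∧ y ∉ S := by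
  simp only [switchPartners, SimpleGraph.mk_mem_interedges_iff, mem_compl, mem_union, mem_insert,
    SimpleGraph.mem_neighborFinset, not_or] at h
  obtain ⟨⟨hxS, hxw, hwx⟩, ⟨hyS, hya, hay⟩, hxy⟩ := h
  exact ⟨⟨hwa, hxy, Ne.symm hxw, hwx, Ne.symm hya, hay⟩, hxS, hyS⟩

end Switching

section RegularClass

variable {V : Type*} [Fintype V] {r : ℕ} {S A : Finset V} {G₀ : SimpleGraph V} {w a : V}

/-- The `r`-regular graphs on the vertex set `V`. -/
noncomputable def regularGraphs (V : Type*) [Fintype V] (r : ℕ) : Finset (SimpleGraph V) :=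
  {G | G.IsRegularOfDegree r}

/-- The `r`-regular graphs in which the vertices of `S` have the same neighbourhoods as in `G₀`: the
event on which a uniformly random regular graph is conditioned once `S` has been explored. -/
noncomputable def regularClass (r : ℕ) (S : Finset V) (G₀ : SimpleGraph V) :
    Finset (SimpleGraph V) :=
  {G ∈ regularGraphs V r | Set.EqOn G.neighborSet G₀.neighborSet S}

lemma mem_regularGraphs {G : SimpleGraph V} : G ∈ regularGraphs V r ↔ G.IsRegularOfDegree r := by
  simp [regularGraphs]

lemma mem_regularClass {G : SimpleGraph V} : G ∈ regularClass r S G₀ ↔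
    G.IsRegularOfDegree r ∧ Set.EqOn G.neighborSet G₀.neighborSet S := by
  simp [regularClass, mem_regularGraphs]

lemma switch_mem_regularClass {G : SimpleGraph V} {x y : V} (hG : G ∈ regularClass r S G₀)
    (hw : w ∉ S) (ha : a ∉ S) (hwa : G.Adj w a) (hxy : (x, y) ∈ switchPartners G S w a) :
    switch G w a x y ∈ regularClass r S G₀ := by
  obtain ⟨h, hx, hy⟩ := isSwitchable_of_mem_switchPartners hwa hxy
  rw [mem_regularClass] at hG ⊢
  refine ⟨fun u ↦ (h.degree_switch u).trans (hG.1.degree_eq u), fun u hu ↦ ?_⟩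
  rw [← hG.2 hu]
  exact h.neighborSet_switch_of_ne (by grind) (by grind) (by grind) (by grind)

lemma subset_neighborFinset_switch {G : SimpleGraph V} {x y : V} (haA : a ∉ A)
    (hA : insert a A ⊆ G.neighborFinset w) (h : IsSwitchable G w a x y) :
    A ⊆ (switch G w a x y).neighborFinset w := by
  intro u hu
  have hwu := hA (mem_insert_of_mem hu)
  rw [SimpleGraph.mem_neighborFinset, ← SimpleGraph.mem_neighborSet, h.neighborSet_switch_left]
  exact .inr ⟨by simpa using hwu, by grind⟩

/-- Switching away the edge `wa` maps a graph `G` of the left-hand class and a partner `(x, y)` to a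
graph of the right-hand class in which `x` and `y` are neighbours of `w` and `a`. -/
lemma sum_card_switchPartners_le (hw : w ∉ S) (ha : a ∉ S) (haA : a ∉ A) :
    ∑ G ∈ regularClass r S G₀ with insert a A ⊆ G.neighborFinset w, #(switchPartners G S w a) ≤
      #{G ∈ regularClass r S G₀ | A ⊆ G.neighborFinset w} * (r * r) := by
  set C := {G ∈ regularClass r S G₀ | A ⊆ G.neighborFinset w} with hC
  have hcard : ∑ G ∈ C, #(G.neighborFinset w ×ˢ G.neighborFinset a) = #C * (r * r) := by
    refine sum_const_nat fun G hG ↦ ?_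
    have hreg := (mem_regularClass.1 (mem_filter.1 hG).1).1
    rw [card_product, G.card_neighborFinset_eq_degree, G.card_neighborFinset_eq_degree,
      hreg.degree_eq, hreg.degree_eq]
  have hswitch {G : SimpleGraph V} {p : V × V} (hG : insert a A ⊆ G.neighborFinset w)
      (hp : p ∈ switchPartners G S w a) : IsSwitchable G w a p.1 p.2 :=
    (isSwitchable_of_mem_switchPartners (by simpa using hG (mem_insert_self a A)) hp).1
  rw [← hcard, ← card_sigma, ← card_sigma]
  refine card_le_card_of_injOn (fun q ↦ ⟨switch q.1 w a q.2.1 q.2.2, q.2⟩) ?_ ?_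
  · rintro ⟨G, x, y⟩ hq
    simp only [coe_sigma, Set.mem_sigma_iff, mem_coe, mem_filter, hC, mem_product,
      SimpleGraph.mem_neighborFinset] at hq ⊢
    obtain ⟨⟨hG, hA⟩, hp⟩ := hq
    have h := hswitch hA hp
    exact ⟨⟨switch_mem_regularClass hG hw ha h.adj_left hp, subset_neighborFinset_switch haA hA h⟩,
      (switch_adj h.ne_left h.ne_right).2 (by simp), (switch_adj h.ne_left h.ne_right).2 (by simp)⟩
  · rintro ⟨G, p⟩ hG ⟨H, q⟩ hH heq
    simp only [coe_sigma, Set.mem_sigma_iff, mem_coe, mem_filter] at hG hH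
    obtain ⟨hGH, rfl⟩ : switch G w a p.1 p.2 = switch H w a q.1 q.2 ∧ p = q := by simpa using heq
    obtain rfl : G = H := by
      rw [← (hswitch hG.1.2 hG.2).switch_switch, hGH, (hswitch hH.1.2 hH.2).switch_switch]
    rfl

lemma card_mul_card_insert_subset_le (hr : 0 < r) (hS : 4 * (#S + 1 + r) ≤ Fintype.card V)
    (hw : w ∉ S) (ha : a ∉ S) (haA : a ∉ A) :
    Fintype.card V * #{G ∈ regularClass r S G₀ | insert a A ⊆ G.neighborFinset w} ≤
      2 * r * #{G ∈ regularClass r S G₀ | A ⊆ G.neighborFinset w} := by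
  refine le_of_mul_le_mul_left ?_ hr
  calc r * (Fintype.card V * #{G ∈ regularClass r S G₀ | insert a A ⊆ G.neighborFinset w})
      = ∑ _G ∈ regularClass r S G₀ with insert a A ⊆ _G.neighborFinset w, r * Fintype.card V := by
        rw [sum_const, smul_eq_mul]; ring
    _ ≤ 2 * ∑ G ∈ regularClass r S G₀ with insert a A ⊆ G.neighborFinset w,
          #(switchPartners G S w a) := by
        rw [mul_sum]
        exact sum_le_sum fun G hG ↦ le_two_mul_card_switchPartners
          (mem_regularClass.1 (mem_filter.1 hG).1).1 hS w a
    _ ≤ 2 * (#{G ∈ regularClass r S G₀ | A ⊆ G.neighborFinset w} * (r * r)) := by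
        gcongr; exact sum_card_switchPartners_le hw ha haA
    _ = _ := by ring

lemma card_subset_neighborFinset_le (hr : 0 < r) (hS : 4 * (#S + 1 + r) ≤ Fintype.card V)
    (hw : w ∉ S) (hA : Disjoint A S) :
    (#{G ∈ regularClass r S G₀ | A ⊆ G.neighborFinset w} : ℝ) ≤
      (2 * r / Fintype.card V) ^ #A * #(regularClass r S G₀) := by
  have hV : (0 : ℝ) < Fintype.card V := Nat.cast_pos.2 (by omega)
  induction A using Finset.induction_on with
  | empty => simp
  | insert a A haA ih =>
    rw [disjoint_insert_left] at hA
    have hstep : Fintype.card V *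
        (#{G ∈ regularClass r S G₀ | insert a A ⊆ G.neighborFinset w} : ℝ) ≤
        2 * r * #{G ∈ regularClass r S G₀ | A ⊆ G.neighborFinset w} :=
      mod_cast card_mul_card_insert_subset_le hr hS hw hA.1 haA
    calc (#{G ∈ regularClass r S G₀ | insert a A ⊆ G.neighborFinset w} : ℝ)
        ≤ 2 * r / Fintype.card V * #{G ∈ regularClass r S G₀ | A ⊆ G.neighborFinset w} := by
          rwa [div_mul_eq_mul_div, le_div_iff₀' hV]
      _ ≤ 2 * r / Fintype.card V *
          ((2 * r / Fintype.card V) ^ #A * #(regularClass r S G₀)) := by gcongr; exact ih hA.2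
      _ = (2 * r / Fintype.card V) ^ #(insert a A) * #(regularClass r S G₀) := by
          rw [card_insert_of_notMem haA, pow_succ']; ring

end RegularClass

section Moment

lemma sum_one_add_pow_card_inter_le {ι V : Type*} (C : Finset ι) (N : ι → Finset V) (D : Finset V)
    {q t : ℝ} (ht : 0 ≤ t) (h : ∀ A ⊆ D, (#{i ∈ C | A ⊆ N i} : ℝ) ≤ q ^ #A * #C) :
    ∑ i ∈ C, (1 + t) ^ #(D ∩ N i) ≤ (1 + t * q) ^ #D * #C := by
  have hexpand (B : Finset V) (z : ℝ) : (1 + z) ^ #B = ∑ A ∈ B.powerset, z ^ #A := by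
    simpa [add_comm] using (sum_pow_mul_eq_add_pow z 1 B).symm
  calc ∑ i ∈ C, (1 + t) ^ #(D ∩ N i)
      = ∑ i ∈ C, ∑ A ∈ D.powerset with A ⊆ N i, t ^ #A := by
        refine sum_congr rfl fun i _ ↦ ?_
        rw [hexpand]
        have hpowerset : (D ∩ N i).powerset = {A ∈ D.powerset | A ⊆ N i} := by
          ext A
          simp only [mem_powerset, mem_filter, subset_inter_iff]
        rw [hpowerset]
    _ = ∑ A ∈ D.powerset, t ^ #A * #{i ∈ C | A ⊆ N i} := by
        simp_rw [sum_filter]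
        rw [sum_comm]
        simp_rw [← sum_filter, sum_const, nsmul_eq_mul, mul_comm]
    _ ≤ ∑ A ∈ D.powerset, t ^ #A * (q ^ #A * #C) :=
        sum_le_sum fun A hA ↦ by gcongr; exact h A (mem_powerset.1 hA)
    _ = (1 + t * q) ^ #D * #C := by
        rw [hexpand, sum_mul]
        exact sum_congr rfl fun A _ ↦ by rw [mul_pow, mul_assoc]

variable {V : Type*} [Fintype V] {r m : ℕ} {S : Finset V} {G₀ : SimpleGraph V} {v w : V} {θ μ : ℝ}

lemma sum_exp_card_inter_neighborFinset_le (hr : 0 < r) (hθ : 0 ≤ θ)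
    (hS : 4 * (#S + 1 + r) ≤ Fintype.card V) (hw : w ∉ S) {D : Finset V} (hD : Disjoint D S) :
    ∑ G ∈ regularClass r S G₀, Real.exp (θ * #(D ∩ G.neighborFinset w)) ≤
      Real.exp (Real.exp θ * (2 * r / Fintype.card V) * #D) * #(regularClass r S G₀) := by
  set q : ℝ := 2 * r / Fintype.card V
  have hq : 0 ≤ q := by positivity
  have hexp : 0 ≤ Real.exp θ - 1 := sub_nonneg.2 (Real.one_le_exp hθ)
  calc ∑ G ∈ regularClass r S G₀, Real.exp (θ * #(D ∩ G.neighborFinset w))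
      = ∑ G ∈ regularClass r S G₀, (1 + (Real.exp θ - 1)) ^ #(D ∩ G.neighborFinset w) := by
        simp only [add_sub_cancel, ← Real.exp_nat_mul, mul_comm]
    _ ≤ (1 + (Real.exp θ - 1) * q) ^ #D * #(regularClass r S G₀) :=
        sum_one_add_pow_card_inter_le _ _ D hexp fun A hA ↦
          card_subset_neighborFinset_le hr hS hw (disjoint_of_subset_left hA hD)
    _ ≤ Real.exp (Real.exp θ * q) ^ #D * #(regularClass r S G₀) := by
        gcongr
        linarith [Real.add_one_le_exp (Real.exp θ * q)]
    _ = Real.exp (Real.exp θ * q * #D) * #(regularClass r S G₀) := by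
        rw [← Real.exp_nat_mul, mul_comm (#D : ℝ)]

/-- The exponential potential of an exploration, a supermartingale once the discount `μ` per
explored vertex outweighs the expected growth of the excess. -/
noncomputable def potential (θ μ : ℝ) (v : V) (G : SimpleGraph V) (S : Finset V) : ℝ :=
  Real.exp (θ * excess G v S - μ * #S)

lemma sum_potential_insert_le (hr : 0 < r) (hθ : 0 ≤ θ) (hm : 4 * (m + 1 + r) ≤ Fintype.card V)
    (hμ : Real.exp θ * (2 * r / Fintype.card V) * (r * m + 1) ≤ μ)
    (hS : #S ≤ m) (hw : w ∈ discovered G₀ v S \ S) :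
    ∑ G ∈ regularClass r S G₀, potential θ μ v G (insert w S) ≤
      ∑ G ∈ regularClass r S G₀, potential θ μ v G S := by
  rcases (regularClass r S G₀).eq_empty_or_nonempty with hempty | ⟨G₁, hG₁⟩
  · simp [hempty]
  set D := discovered G₀ v S \ S with hD
  have hDcard : (#D : ℝ) ≤ r * m + 1 := by
    rw [mem_regularClass] at hG₁
    rw [hD, ← discovered_congr hG₁.2]
    exact mod_cast (card_frontier_le hG₁.1).trans (by gcongr)
  have hpotential {G : SimpleGraph V} (hG : G ∈ regularClass r S G₀) :
      potential θ μ v G S = potential θ μ v G₀ S := by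
    rw [potential, potential, excess_congr (mem_regularClass.1 hG).2]
  have hinsert {G : SimpleGraph V} (hG : G ∈ regularClass r S G₀) :
      potential θ μ v G (insert w S) =
        potential θ μ v G₀ S * Real.exp (-μ) * Real.exp (θ * #(D ∩ G.neighborFinset w)) := by
    have hdisc := discovered_congr (v := v) (mem_regularClass.1 hG).2
    rw [← hpotential hG, potential, potential, excess_insert (hdisc ▸ hw), hdisc, ← hD, inter_comm,
      card_insert_of_notMem (mem_sdiff.1 hw).2, ← Real.exp_add, ← Real.exp_add]
    push_cast
    ring_nf
  have hgrowth : Real.exp (Real.exp θ * (2 * r / Fintype.card V) * #D) ≤ Real.exp μ :=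
    Real.exp_le_exp.2 (hμ.trans' (by gcongr))
  calc ∑ G ∈ regularClass r S G₀, potential θ μ v G (insert w S)
      = potential θ μ v G₀ S * Real.exp (-μ) *
          ∑ G ∈ regularClass r S G₀, Real.exp (θ * #(D ∩ G.neighborFinset w)) := by
        rw [sum_congr rfl fun G ↦ hinsert, mul_sum]
    _ ≤ potential θ μ v G₀ S * Real.exp (-μ) * (Real.exp μ * #(regularClass r S G₀)) := by
        rw [potential]
        gcongr
        exact (sum_exp_card_inter_neighborFinset_le hr hθ (by omega) (mem_sdiff.1 hw).2
          sdiff_disjoint).trans (by gcongr)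
    _ = ∑ G ∈ regularClass r S G₀, potential θ μ v G S := by
        rw [sum_congr rfl fun G ↦ hpotential, sum_const, nsmul_eq_mul, mul_assoc _ (Real.exp (-μ)),
          ← mul_assoc (Real.exp (-μ)), ← Real.exp_add, neg_add_cancel, Real.exp_zero, one_mul,
          mul_comm]

end Moment

section OpenBall

variable {V : Type*} [Fintype V] {G H : SimpleGraph V} {v : V} {k l : ℕ}

/-- The vertices at distance less than `k` from `v`. -/
noncomputable def openBall (G : SimpleGraph V) (v : V) (k : ℕ) : Finset V := {u | G.edist v u < k}

/-- The vertices at distance exactly `k` from `v`, denoted `Q_{v,G}^k` in the paper. -/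
noncomputable def layer (G : SimpleGraph V) (v : V) (k : ℕ) : Finset V := {u | G.edist v u = k}

lemma mem_openBall {u : V} : u ∈ openBall G v k ↔ G.edist v u < k := by simp [openBall]

lemma mem_layer {u : V} : u ∈ layer G v k ↔ G.edist v u = k := by simp [layer]

lemma openBall_zero : openBall G v 0 = ∅ := by ext; simp [mem_openBall]

lemma openBall_mono (h : k ≤ l) : openBall G v k ⊆ openBall G v l := fun _ hu ↦
  mem_openBall.2 ((mem_openBall.1 hu).trans_le (mod_cast h))

lemma mem_openBall_succ {u : V} : u ∈ openBall G v (k + 1) ↔ G.edist v u ≤ k := by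
  rw [mem_openBall, Nat.cast_succ]
  exact ENat.lt_add_one_iff (ENat.natCast_ne_top k)

lemma openBall_union_layer : openBall G v k ∪ layer G v k = openBall G v (k + 1) := by
  ext u
  rw [mem_union, mem_openBall, mem_layer, mem_openBall_succ, le_iff_lt_or_eq]

lemma disjoint_openBall_layer : Disjoint (openBall G v k) (layer G v k) :=
  disjoint_left.2 fun _ hu hu' ↦ (mem_openBall.1 hu).ne (mem_layer.1 hu')

lemma layer_eq_sdiff : layer G v k = openBall G v (k + 1) \ openBall G v k := by
  rw [← openBall_union_layer, union_sdiff_cancel_left disjoint_openBall_layer]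

lemma layer_zero : layer G v 0 = {v} := by
  ext u
  rw [mem_layer, Nat.cast_zero, SimpleGraph.edist_eq_zero_iff, mem_singleton, eq_comm]

lemma mem_openBall_succ_of_adj {x u : V} (hx : x ∈ openBall G v k) (h : G.Adj x u) :
    u ∈ openBall G v (k + 1) := by
  rw [mem_openBall] at hx
  rw [mem_openBall_succ]
  calc G.edist v u ≤ G.edist v x + G.edist x u := G.edist_triangle
    _ = G.edist v x + 1 := by rw [SimpleGraph.edist_eq_one_iff_adj.2 h]
    _ ≤ k := Order.add_one_le_of_lt hx

lemma exists_adj_of_mem_layer_succ {u : V} (hu : u ∈ layer G v (k + 1)) :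
    ∃ x ∈ layer G v k, G.Adj x u := by
  rw [mem_layer] at hu
  obtain ⟨p, hp⟩ := SimpleGraph.exists_walk_of_edist_eq_coe (SimpleGraph.edist_comm.trans hu)
  cases p with
  | nil => simp at hp
  | @cons _ x _ hux p =>
    rw [SimpleGraph.Walk.length_cons, Nat.add_right_cancel_iff] at hp
    refine ⟨x, mem_layer.2 (le_antisymm ?_ ?_), hux.symm⟩
    · rw [SimpleGraph.edist_comm, ← hp]
      exact p.edist_le
    · by_contra! hx
      exact (mem_openBall.1 (mem_openBall_succ_of_adj (mem_openBall.2 hx) hux.symm)).ne hu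

lemma discovered_openBall : discovered G v (openBall G v k) = openBall G v (k + 1) := by
  ext u
  rw [mem_discovered]
  constructor
  · rintro (rfl | hu | ⟨x, hx, hxu⟩)
    · simp [mem_openBall]
    · exact openBall_mono k.le_succ hu
    · exact mem_openBall_succ_of_adj hx hxu
  · rw [← openBall_union_layer, mem_union]
    rintro (hu | hu)
    · exact .inr (.inl hu)
    · cases k with
      | zero => exact .inl (by simpa [layer_zero] using hu)
      | succ k =>
        obtain ⟨x, hx, hxu⟩ := exists_adj_of_mem_layer_succ hu
        exact .inr (.inr ⟨x, openBall_union_layer.subset (mem_union_right _ hx), hxu⟩)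

lemma openBall_congr (h : Set.EqOn H.neighborSet G.neighborSet (openBall G v k)) :
    openBall H v k = openBall G v k := by
  induction k with
  | zero => simp only [openBall_zero]
  | succ k ih =>
    have hk : Set.EqOn H.neighborSet G.neighborSet (openBall G v k) :=
      h.mono (coe_subset.2 (openBall_mono k.le_succ))
    rw [← discovered_openBall, ih hk, discovered_congr hk, discovered_openBall]

lemma layer_congr (h : Set.EqOn H.neighborSet G.neighborSet (openBall G v k)) :
    layer H v k = layer G v k := by
  rw [layer_eq_sdiff, layer_eq_sdiff, ← discovered_openBall, ← discovered_openBall,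
    openBall_congr h, discovered_congr h]

end OpenBall

section StoppingSet

variable {V : Type*} [Fintype V] {r m k : ℕ} {v : V} {θ μ : ℝ}

/-- A vertex set depending on the graph is a stopping set if it is determined by the neighbourhoods
of its own vertices, as is the set revealed at a stopping time of a graph exploration. -/
def IsStoppingSet (X : SimpleGraph V → Finset V) : Prop :=
  ∀ ⦃G H : SimpleGraph V⦄, Set.EqOn H.neighborSet G.neighborSet (X G) → X H = X G

lemma IsStoppingSet.sum_regularGraphs_le {X : SimpleGraph V → Finset V} (hX : IsStoppingSet X)
    {f g : SimpleGraph V → ℝ}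
    (h : ∀ G₀ ∈ regularGraphs V r,
      ∑ G ∈ regularClass r (X G₀) G₀, f G ≤ ∑ G ∈ regularClass r (X G₀) G₀, g G) :
    ∑ G ∈ regularGraphs V r, f G ≤ ∑ G ∈ regularGraphs V r, g G := by
  set cell : SimpleGraph V → Finset (SimpleGraph V) := fun G ↦ regularClass r (X G) G
  have hfiber (G₀ : SimpleGraph V) : {G ∈ regularGraphs V r | cell G = cell G₀} = cell G₀ := by
    ext G
    rw [mem_filter]
    constructor
    · rintro ⟨hG, hcell⟩
      exact hcell ▸ mem_regularClass.2 ⟨mem_regularGraphs.1 hG, fun _ _ ↦ rfl⟩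
    · intro hG
      obtain ⟨hreg, heq⟩ := mem_regularClass.1 hG
      refine ⟨mem_regularGraphs.2 hreg, ?_⟩
      simp only [cell, regularClass, hX heq]
      exact filter_congr fun H _ ↦ ⟨fun hH ↦ hH.trans heq, fun hH ↦ hH.trans heq.symm⟩
  have hmaps : ∀ G ∈ regularGraphs V r, cell G ∈ (regularGraphs V r).image cell :=
    fun G ↦ mem_image_of_mem cell
  rw [← sum_fiberwise_of_maps_to hmaps f, ← sum_fiberwise_of_maps_to hmaps g]
  refine sum_le_sum fun c hc ↦ ?_
  obtain ⟨G₀, hG₀, rfl⟩ := mem_image.1 hc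
  rw [hfiber G₀]
  exact h G₀ hG₀

/-- The open ball enlarged by those vertices of the next layer that lie in `W`: the set explored so
far when the vertices of the layer are explored one at a time. -/
noncomputable def partialBall (v : V) (k : ℕ) (W : Finset V) (G : SimpleGraph V) : Finset V :=
  openBall G v k ∪ layer G v k ∩ W

lemma openBall_subset_partialBall {W : Finset V} {G : SimpleGraph V} :
    openBall G v k ⊆ partialBall v k W G := subset_union_left

lemma partialBall_subset {W : Finset V} {G : SimpleGraph V} :
    partialBall v k W G ⊆ openBall G v (k + 1) := by
  rw [← openBall_union_layer]
  exact union_subset_union_right inter_subset_left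

lemma layer_eq_of_eqOn_partialBall {W : Finset V} {G H : SimpleGraph V}
    (h : Set.EqOn H.neighborSet G.neighborSet (partialBall v k W G)) :
    layer H v k = layer G v k :=
  layer_congr (h.mono (coe_subset.2 openBall_subset_partialBall))

lemma isStoppingSet_partialBall (v : V) (k : ℕ) (W : Finset V) :
    IsStoppingSet (partialBall v k W) := by
  intro G H h
  simp only [partialBall, layer_eq_of_eqOn_partialBall h,
    openBall_congr (h.mono (coe_subset.2 openBall_subset_partialBall))]

lemma mem_discovered_partialBall_sdiff {W : Finset V} {G : SimpleGraph V} {w : V}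
    (hw : w ∈ layer G v k) (hW : w ∉ W) :
    w ∈ discovered G v (partialBall v k W G) \ partialBall v k W G := by
  refine mem_sdiff.2 ⟨discovered_mono openBall_subset_partialBall ?_, ?_⟩
  · rw [discovered_openBall, ← openBall_union_layer]
    exact mem_union_right _ hw
  · have := disjoint_right.1 disjoint_openBall_layer hw
    simp [partialBall, this, hW]

lemma sum_potential_partialBall_insert_le (hr : 0 < r) (hθ : 0 ≤ θ)
    (hm : 4 * (m + 1 + r) ≤ Fintype.card V)
    (hμ : Real.exp θ * (2 * r / Fintype.card V) * (r * m + 1) ≤ μ)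
    (hcard : ∀ G ∈ regularGraphs V r, #(openBall G v (k + 1)) ≤ m)
    {w : V} {W : Finset V} (hw : w ∉ W) :
    ∑ G ∈ regularGraphs V r, potential θ μ v G (partialBall v k (insert w W) G) ≤
      ∑ G ∈ regularGraphs V r, potential θ μ v G (partialBall v k W G) := by
  refine (isStoppingSet_partialBall v k W).sum_regularGraphs_le fun G₀ hG₀ ↦ ?_
  have hX {G : SimpleGraph V} (hG : G ∈ regularClass r (partialBall v k W G₀) G₀) :
      partialBall v k W G = partialBall v k W G₀ :=
    isStoppingSet_partialBall v k W (mem_regularClass.1 hG).2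
  have hlayer {G : SimpleGraph V} (hG : G ∈ regularClass r (partialBall v k W G₀) G₀) :
      layer G v k = layer G₀ v k := layer_eq_of_eqOn_partialBall (mem_regularClass.1 hG).2
  by_cases hwk : w ∈ layer G₀ v k
  · have hinsert {G : SimpleGraph V} (hG : G ∈ regularClass r (partialBall v k W G₀) G₀) :
        partialBall v k (insert w W) G = insert w (partialBall v k W G₀) := by
      rw [← hX hG, partialBall, inter_insert_of_mem (hlayer hG ▸ hwk), union_insert, partialBall]
    have hS : #(partialBall v k W G₀) ≤ m :=
      (card_le_card partialBall_subset).trans (hcard G₀ hG₀)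
    convert sum_potential_insert_le hr hθ hm hμ hS
      (mem_discovered_partialBall_sdiff hwk hw) using 3 with G hG G hG
    · exact hinsert hG
    · exact hX hG
  · refine (sum_congr rfl fun G hG ↦ ?_).le
    rw [partialBall, inter_insert_of_notMem (hlayer hG ▸ hwk), partialBall]

lemma sum_potential_openBall_succ_le (hr : 0 < r) (hθ : 0 ≤ θ)
    (hm : 4 * (m + 1 + r) ≤ Fintype.card V)
    (hμ : Real.exp θ * (2 * r / Fintype.card V) * (r * m + 1) ≤ μ)
    (hcard : ∀ G ∈ regularGraphs V r, #(openBall G v (k + 1)) ≤ m) :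
    ∑ G ∈ regularGraphs V r, potential θ μ v G (openBall G v (k + 1)) ≤
      ∑ G ∈ regularGraphs V r, potential θ μ v G (openBall G v k) := by
  suffices hW : ∀ W : Finset V,
      ∑ G ∈ regularGraphs V r, potential θ μ v G (partialBall v k W G) ≤
        ∑ G ∈ regularGraphs V r, potential θ μ v G (openBall G v k) by
    simpa only [partialBall, inter_univ, openBall_union_layer] using hW univ
  intro W
  induction W using Finset.induction_on with
  | empty => simp only [partialBall, inter_empty, union_empty, le_refl]
  | insert w W hw ih =>
    exact (sum_potential_partialBall_insert_le hr hθ hm hμ hcard hw).trans ih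

lemma sum_potential_openBall_le (hr : 0 < r) (hθ : 0 ≤ θ)
    (hm : 4 * (m + 1 + r) ≤ Fintype.card V)
    (hμ : Real.exp θ * (2 * r / Fintype.card V) * (r * m + 1) ≤ μ)
    (hcard : ∀ G ∈ regularGraphs V r, #(openBall G v k) ≤ m) :
    ∑ G ∈ regularGraphs V r, potential θ μ v G (openBall G v k) ≤ #(regularGraphs V r) := by
  induction k with
  | zero => simp [openBall_zero, potential, excess_empty]
  | succ k ih =>
    exact (sum_potential_openBall_succ_le hr hθ hm hμ hcard).trans
      (ih fun G hG ↦ (card_le_card (openBall_mono k.le_succ)).trans (hcard G hG))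

lemma card_le_excess_openBall_le (hr : 0 < r) (hθ : 0 ≤ θ)
    (hm : 4 * (m + 1 + r) ≤ Fintype.card V)
    (hμ : Real.exp θ * (2 * r / Fintype.card V) * (r * m + 1) ≤ μ)
    (hcard : ∀ G ∈ regularGraphs V r, #(openBall G v k) ≤ m) (x : ℝ) :
    (#{G ∈ regularGraphs V r | x ≤ excess G v (openBall G v k)} : ℝ) ≤
      Real.exp (μ * m - θ * x) * #(regularGraphs V r) := by
  have hμ0 : 0 ≤ μ := hμ.trans' (by positivity)
  have hpotential : ∀ G ∈ regularGraphs V r, x ≤ excess G v (openBall G v k) →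
      Real.exp (θ * x - μ * m) ≤ potential θ μ v G (openBall G v k) := fun G hG hx ↦ by
    have := hcard G hG
    rw [potential]
    gcongr
  have hmarkov : #{G ∈ regularGraphs V r | x ≤ excess G v (openBall G v k)} *
      Real.exp (θ * x - μ * m) ≤ #(regularGraphs V r) :=
    calc #{G ∈ regularGraphs V r | x ≤ excess G v (openBall G v k)} * Real.exp (θ * x - μ * m)
        ≤ ∑ G ∈ regularGraphs V r with x ≤ excess G v (openBall G v k),
            potential θ μ v G (openBall G v k) := by
          rw [← nsmul_eq_mul]
          exact card_nsmul_le_sum _ _ _ fun G hG ↦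
            hpotential G (mem_filter.1 hG).1 (mem_filter.1 hG).2
      _ ≤ ∑ G ∈ regularGraphs V r, potential θ μ v G (openBall G v k) :=
          sum_le_sum_of_subset_of_nonneg (filter_subset _ _) fun _ _ _ ↦ (Real.exp_pos _).le
      _ ≤ #(regularGraphs V r) := sum_potential_openBall_le hr hθ hm hμ hcard
  rw [← neg_sub (θ * x), Real.exp_neg, inv_mul_eq_div, le_div_iff₀ (Real.exp_pos _)]
  exact hmarkov

end StoppingSet

section Growth

variable {V : Type*} [Fintype V] {G : SimpleGraph V} {v : V} {s k : ℕ} {κ ε : ℝ}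

/-- The number of edges joining the layers `k` and `k + 1` around `v`. -/
noncomputable def layerEdges (G : SimpleGraph V) (v : V) (k : ℕ) : ℕ :=
  #(G.interedges (layer G v k) (layer G v (k + 1)))

lemma card_layer_succ_le_layerEdges : #(layer G v (k + 1)) ≤ layerEdges G v k := by
  rw [layerEdges, card_interedges_comm]
  refine card_le_card_interedges fun u hu ↦ ?_
  obtain ⟨x, hx, hxu⟩ := exists_adj_of_mem_layer_succ hu
  exact ⟨x, hx, hxu.symm⟩

lemma card_interedges_layer_compl :
    #(G.interedges (layer G v k) (openBall G v k)ᶜ) =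
      #(G.interedges (layer G v k) (layer G v k)) + layerEdges G v k := by
  have hsub : layer G v k ⊆ openBall G v (k + 1) := openBall_union_layer.subset.trans' (by simp)
  have hfar : G.interedges (layer G v k) (openBall G v (k + 2))ᶜ = ∅ :=
    interedges_eq_empty fun x hx y hy hxy ↦
      mem_compl.1 hy (mem_openBall_succ_of_adj (hsub hx) hxy)
  have hcompl (j : ℕ) : (openBall G v j)ᶜ = layer G v j ∪ (openBall G v (j + 1))ᶜ := by
    have : openBall G v j ⊆ openBall G v (j + 1) := openBall_mono j.le_succ
    ext u
    simp only [layer_eq_sdiff, mem_compl, mem_union, mem_sdiff]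
    grind
  have hdisj (j : ℕ) : Disjoint (layer G v j) (openBall G v (j + 1))ᶜ := by
    rw [layer_eq_sdiff]
    exact disjoint_compl_right.mono_left sdiff_subset
  rw [hcompl, card_interedges_union_right G _ (hdisj k), hcompl,
    card_interedges_union_right G _ (hdisj (k + 1)), hfar, card_empty, add_zero, layerEdges]

lemma card_interedges_layer_openBall :
    #(G.interedges (layer G v (k + 1)) (openBall G v (k + 1))) = layerEdges G v k := by
  have hfar : G.interedges (layer G v (k + 1)) (openBall G v k) = ∅ :=
    interedges_eq_empty fun x hx y hy hxy ↦
      disjoint_right.1 disjoint_openBall_layer hx (mem_openBall_succ_of_adj hy hxy.symm)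
  rw [← openBall_union_layer, card_interedges_union_right G _ disjoint_openBall_layer, hfar,
    card_empty, zero_add, card_interedges_comm, layerEdges]

lemma excess_openBall_succ :
    excess G v (openBall G v (k + 1)) = excess G v (openBall G v k) + layerEdges G v k +
      #(G.interedges (layer G v k) (layer G v k)) / 2 - #(layer G v (k + 1)) := by
  rw [← openBall_union_layer, excess_union disjoint_openBall_layer, openBall_union_layer,
    discovered_openBall, discovered_openBall, ← layer_eq_sdiff, card_interedges_layer_compl]
  push_cast
  ring

lemma card_layer_mul_degree (hG : G.IsRegularOfDegree (s + 1)) :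
    (s + 1) * #(layer G v (k + 1)) = layerEdges G v k +
      #(G.interedges (layer G v (k + 1)) (layer G v (k + 1))) + layerEdges G v (k + 1) := by
  rw [← card_interedges_univ_right hG, ← union_compl (openBall G v (k + 1)),
    card_interedges_union_right G _ disjoint_compl_right, card_interedges_layer_openBall,
    card_interedges_layer_compl, add_assoc]

lemma excess_openBall_nonneg : 0 ≤ excess G v (openBall G v k) := by
  induction k with
  | zero => rw [openBall_zero, excess_empty]
  | succ k ih =>
    have := Nat.cast_le (α := ℝ).2 (card_layer_succ_le_layerEdges (G := G) (v := v) (k := k))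
    rw [excess_openBall_succ]
    linarith [Nat.cast_nonneg (α := ℝ) #(G.interedges (layer G v k) (layer G v k))]

lemma card_layer_zero : #(layer G v 0) = 1 := by rw [layer_zero, card_singleton]

lemma card_layer_one (hG : G.IsRegularOfDegree (s + 1)) : #(layer G v 1) = s + 1 := by
  have hlayer : layer G v 1 = G.neighborFinset v := by
    ext u
    rw [mem_layer, Nat.cast_one, SimpleGraph.edist_eq_one_iff_adj, SimpleGraph.mem_neighborFinset]
  rw [hlayer, G.card_neighborFinset_eq_degree, hG.degree_eq]

lemma layerEdges_zero (hG : G.IsRegularOfDegree (s + 1)) : layerEdges G v 0 = s + 1 := by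
  have hlayer : layer G v 1 ⊆ G.neighborFinset v := fun u hu ↦ by
    obtain ⟨x, hx, hxu⟩ := exists_adj_of_mem_layer_succ hu
    rw [layer_zero, mem_singleton] at hx
    simpa [← hx] using hxu
  rw [layerEdges, layer_zero, card_interedges_singleton_left, inter_eq_right.2 hlayer,
    card_layer_one hG]

lemma card_layer_add_two_le (hG : G.IsRegularOfDegree (s + 1)) :
    #(layer G v (k + 2)) ≤ s * #(layer G v (k + 1)) := by
  have := card_layer_mul_degree (v := v) (k := k) hG
  have := card_layer_succ_le_layerEdges (G := G) (v := v) (k := k)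
  have := card_layer_succ_le_layerEdges (G := G) (v := v) (k := k + 1)
  linarith

lemma card_layer_succ_le (hG : G.IsRegularOfDegree (s + 1)) :
    #(layer G v (k + 1)) ≤ (s + 1) * s ^ k := by
  induction k with
  | zero => simp [card_layer_one hG]
  | succ k ih =>
    calc #(layer G v (k + 2)) ≤ s * #(layer G v (k + 1)) := card_layer_add_two_le hG
      _ ≤ s * ((s + 1) * s ^ k) := by gcongr
      _ = (s + 1) * s ^ (k + 1) := by ring

lemma card_openBall_succ_le (hs : 2 ≤ s) (hG : G.IsRegularOfDegree (s + 1)) :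
    #(openBall G v (k + 1)) ≤ 3 * s ^ k := by
  induction k with
  | zero => simp [← openBall_union_layer, openBall_zero, card_layer_zero]
  | succ k ih =>
    rw [← openBall_union_layer, card_union_of_disjoint disjoint_openBall_layer]
    calc #(openBall G v (k + 1)) + #(layer G v (k + 1)) ≤ 3 * s ^ k + (s + 1) * s ^ k :=
          add_le_add ih (card_layer_succ_le hG)
      _ = (s + 4) * s ^ k := by ring
      _ ≤ (3 * s) * s ^ k := by gcongr; omega
      _ = 3 * s ^ (k + 1) := by ring

lemma mul_card_layer_succ_le_card_layer_add_two (hG : G.IsRegularOfDegree (s + 1)) :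
    (s * #(layer G v (k + 1)) : ℝ) ≤
      #(layer G v (k + 2)) + 2 * excess G v (openBall G v (k + 2)) := by
  have hdeg := congr_arg (Nat.cast (R := ℝ)) (card_layer_mul_degree (v := v) (k := k) hG)
  have h₀ := Nat.cast_le (α := ℝ).2 (card_layer_succ_le_layerEdges (G := G) (v := v) (k := k))
  have h₁ := Nat.cast_le (α := ℝ).2 (card_layer_succ_le_layerEdges (G := G) (v := v) (k := k + 1))
  have hnonneg := excess_openBall_nonneg (G := G) (v := v) (k := k)
  push_cast at hdeg
  rw [excess_openBall_succ, excess_openBall_succ]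
  linarith [Nat.cast_nonneg (α := ℝ) #(G.interedges (layer G v k) (layer G v k))]

lemma mul_card_layer_succ_le_layerEdges (hG : G.IsRegularOfDegree (s + 1)) :
    (s * #(layer G v (k + 1)) : ℝ) ≤
      layerEdges G v (k + 1) + 2 * excess G v (openBall G v (k + 2)) := by
  have h := Nat.cast_le (α := ℝ).2 (card_layer_succ_le_layerEdges (G := G) (v := v) (k := k + 1))
  linarith [mul_card_layer_succ_le_card_layer_add_two (v := v) (k := k) hG]

lemma two_add_le_card_layer_succ (hs : 2 ≤ s) (hG : G.IsRegularOfDegree (s + 1))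
    (h : ∀ j ≤ k, excess G v (openBall G v (j + 1)) < 3 / 2) :
    (2 + s ^ (k + 1) / 2 : ℝ) ≤ #(layer G v (k + 1)) := by
  have hs' : (2 : ℝ) ≤ s := mod_cast hs
  induction k with
  | zero =>
    rw [card_layer_one hG]
    push_cast
    linarith
  | succ k ih =>
    have hlt : s * #(layer G v (k + 1)) < #(layer G v (k + 2)) + 3 := by
      have := mul_card_layer_succ_le_card_layer_add_two (v := v) (k := k) hG
      rify
      linarith [h (k + 1) le_rfl]
    have hle : (s * #(layer G v (k + 1)) : ℝ) ≤ #(layer G v (k + 2)) + 2 :=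
      mod_cast Nat.lt_succ_iff.1 hlt
    calc (2 + s ^ (k + 2) / 2 : ℝ) ≤ s * (2 + s ^ (k + 1) / 2) - 2 := by
          linarith [pow_succ' (s : ℝ) (k + 1)]
      _ ≤ s * #(layer G v (k + 1)) - 2 := by
          gcongr
          exact ih fun j hj ↦ h j (hj.trans k.le_succ)
      _ ≤ #(layer G v (k + 2)) := by linarith

lemma pow_mul_le_card_layer_succ (hs : 2 ≤ s) (hG : G.IsRegularOfDegree (s + 1)) (hκ : 0 ≤ κ)
    (h : ∀ j ≤ k, excess G v (openBall G v (j + 1)) < max (3 / 2) (κ * s ^ j)) :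
    (s ^ (k + 1) * (1 / 2 - κ * (k + 1)) : ℝ) ≤ #(layer G v (k + 1)) := by
  have hs' : (2 : ℝ) ≤ s := mod_cast hs
  induction k with
  | zero =>
    rw [card_layer_one hG]
    push_cast
    nlinarith
  | succ k ih =>
    rcases le_or_gt (κ * s ^ (k + 1)) (3 / 2) with hsmall | hlarge
    · have hexcess (j : ℕ) (hj : j ≤ k + 1) : excess G v (openBall G v (j + 1)) < 3 / 2 := by
        refine (h j hj).trans_le (max_le le_rfl (hsmall.trans' ?_))
        gcongr
        linarith
      calc (s ^ (k + 2) * (1 / 2 - κ * ((k + 1 : ℕ) + 1)) : ℝ) ≤ s ^ (k + 2) * (1 / 2) := by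
            gcongr
            exact sub_le_self _ (by positivity)
        _ ≤ 2 + s ^ (k + 2) / 2 := by linarith
        _ ≤ #(layer G v (k + 2)) := two_add_le_card_layer_succ hs hG hexcess
    · have hexcess : excess G v (openBall G v (k + 2)) < κ * s ^ (k + 1) := by
        simpa [hlarge.le] using h (k + 1) le_rfl
      have hgrowth := mul_card_layer_succ_le_card_layer_add_two (v := v) (k := k) hG
      calc (s ^ (k + 2) * (1 / 2 - κ * ((k + 1 : ℕ) + 1)) : ℝ)
          = s * (s ^ (k + 1) * (1 / 2 - κ * (k + 1))) - s * (κ * s ^ (k + 1)) := by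
            push_cast
            ring
        _ ≤ s * #(layer G v (k + 1)) - 2 * (κ * s ^ (k + 1)) := by
            gcongr
            exact ih fun j hj ↦ h j (hj.trans k.le_succ)
        _ ≤ #(layer G v (k + 2)) := by linarith

lemma sub_mul_card_layer_le_layerEdges (hs : 2 ≤ s) (hG : G.IsRegularOfDegree (s + 1)) (hε : 0 < ε)
    (hκ : 0 ≤ κ) (hκε : κ ≤ ε / 8) (hκk : κ * k ≤ 1 / 4) (hk : 12 / ε ≤ (s : ℝ) ^ k)
    (h : ∀ j ≤ k, excess G v (openBall G v (j + 1)) < max (3 / 2) (κ * s ^ j)) :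
    (s - ε) * #(layer G v k) ≤ layerEdges G v k := by
  cases k with
  | zero =>
    rw [layerEdges_zero hG, card_layer_zero]
    push_cast
    linarith
  | succ k =>
    have hlayer : (s ^ (k + 1) / 4 : ℝ) ≤ #(layer G v (k + 1)) :=
      calc (s ^ (k + 1) / 4 : ℝ) ≤ s ^ (k + 1) * (1 / 2 - κ * (k + 1)) := by
            rw [div_eq_mul_inv]
            gcongr
            push_cast at hκk
            linarith
        _ ≤ #(layer G v (k + 1)) :=
            pow_mul_le_card_layer_succ hs hG hκ fun j hj ↦ h j (hj.trans k.le_succ)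
    have hexcess : 2 * excess G v (openBall G v (k + 2)) ≤ ε * (s ^ (k + 1) / 4) := by
      rw [div_le_iff₀' hε] at hk
      have hmax : max (3 / 2) (κ * s ^ (k + 1)) ≤ ε * s ^ (k + 1) / 8 :=
        max_le (by linarith) (by rw [mul_div_right_comm]; gcongr)
      linarith [h (k + 1) le_rfl]
    calc (s - ε) * #(layer G v (k + 1))
        = s * #(layer G v (k + 1)) - ε * #(layer G v (k + 1)) := by ring
      _ ≤ s * #(layer G v (k + 1)) - 2 * excess G v (openBall G v (k + 2)) :=
          sub_le_sub_left (hexcess.trans (by gcongr)) _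
      _ ≤ layerEdges G v (k + 1) := by
          linarith [mul_card_layer_succ_le_layerEdges (v := v) (k := k) hG]

end Growth

section Tail

variable {V : Type*} [Fintype V] {s k : ℕ} {v : V} {θ : ℝ}

lemma card_le_excess_openBall_succ_le (hs : 2 ≤ s) (hθ : 0 ≤ θ)
    (hlog : (s + 1 : ℝ) ≤ Real.log (Fintype.card V))
    (hcard : 4 * (3 * s ^ k + 1 + (s + 1)) ≤ Fintype.card V) (x : ℝ) :
    (#{G ∈ regularGraphs V (s + 1) | x ≤ excess G v (openBall G v (k + 1))} : ℝ) ≤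
      Real.exp (36 * Real.log (Fintype.card V) ^ 2 * (s ^ k) ^ 2 *
        Real.exp (θ - Real.log (Fintype.card V)) - θ * x) * #(regularGraphs V (s + 1)) := by
  set L := Real.log (Fintype.card V)
  set y : ℝ := s ^ k
  have hV : (0 : ℝ) < Fintype.card V := Nat.cast_pos.2 (by omega)
  have hy : 1 ≤ y := one_le_pow₀ (mod_cast (by omega : 1 ≤ s))
  refine (card_le_excess_openBall_le (m := 3 * s ^ k) s.succ_pos hθ hcard le_rfl (fun G hG ↦
    card_openBall_succ_le hs (mem_regularGraphs.1 hG)) x).trans ?_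
  refine mul_le_mul_of_nonneg_right (Real.exp_le_exp.2 (sub_le_sub_right ?_ _)) (Nat.cast_nonneg _)
  push_cast
  calc Real.exp θ * (2 * (s + 1) / Fintype.card V) * ((s + 1) * (3 * y) + 1) * (3 * y)
      ≤ Real.exp θ * (2 * (s + 1) / Fintype.card V) *
          ((s + 1) * (3 * y) + (s + 1) * (3 * y)) * (3 * y) := by
        gcongr
        nlinarith
    _ = 36 * (s + 1) ^ 2 * y ^ 2 * (Real.exp θ / Fintype.card V) := by ring
    _ = 36 * (s + 1) ^ 2 * y ^ 2 * Real.exp (θ - L) := by rw [Real.exp_sub, Real.exp_log hV]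
    _ ≤ 36 * L ^ 2 * y ^ 2 * Real.exp (θ - L) := by gcongr

end Tail

section Asymptotics

open Filter

variable {c η : ℝ}

lemma eventually_pow_le_mul_exp (k : ℕ) {b : ℝ} (hc : 0 < c) (hb : 0 < b) :
    ∀ᶠ x : ℝ in atTop, x ^ k ≤ c * Real.exp (b * x) := by
  filter_upwards [(isLittleO_pow_exp_pos_mul_atTop k hb).bound hc] with x hx
  rw [Real.norm_of_nonneg (Real.exp_pos _).le] at hx
  exact (le_abs_self _).trans hx

lemma eventually_large_tilt_le (c : ℝ) :
    ∀ᶠ L : ℝ in atTop, ∀ y : ℝ, 0 ≤ y → y ≤ Real.exp (L / 16) →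
      36 * L ^ 2 * y ^ 2 * Real.exp (3 / 4 * L - L) - 3 / 4 * L * max (3 / 2) (c / L * y) ≤
        -(17 / 16 * L) := by
  filter_upwards [eventually_ge_atTop 16, eventually_pow_le_mul_exp 2
    (by norm_num : (0 : ℝ) < 1 / 36) (by norm_num : (0 : ℝ) < 1 / 8)] with L hL hquad y hy hyL
  have hmain : 36 * L ^ 2 * y ^ 2 * Real.exp (3 / 4 * L - L) ≤ 1 :=
    calc 36 * L ^ 2 * y ^ 2 * Real.exp (3 / 4 * L - L)
        ≤ 36 * (1 / 36 * Real.exp (1 / 8 * L)) * Real.exp (L / 16) ^ 2 *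
            Real.exp (3 / 4 * L - L) := by gcongr
      _ = Real.exp (1 / 8 * L + 2 * (L / 16) + (3 / 4 * L - L)) := by
          rw [← Real.exp_nat_mul, Real.exp_add, Real.exp_add]
          push_cast
          ring
      _ = 1 := by ring_nf; exact Real.exp_zero
  have hgain : 3 / 4 * L * (3 / 2) ≤ 3 / 4 * L * max (3 / 2) (c / L * y) := by
    gcongr
    exact le_max_left _ _
  linarith

lemma eventually_small_tilt_le (hc : 0 < c) (hη : 0 < η) :
    ∀ᶠ L : ℝ in atTop, ∀ y : ℝ, Real.exp (L / 16) ≤ y → y ≤ Real.exp ((1 - η) * L) →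
      36 * L ^ 2 * y ^ 2 * Real.exp (η / 2 * L - L) - η / 2 * L * max (3 / 2) (c / L * y) ≤
        -(17 / 16 * L) := by
  filter_upwards [eventually_gt_atTop 0,
    eventually_pow_le_mul_exp 2 (by positivity : 0 < η * c / 144) (by positivity : 0 < η / 2),
    eventually_pow_le_mul_exp 1 (by positivity : 0 < η * c * (4 / 17))
      (by norm_num : (0 : ℝ) < 1 / 16)] with L hL hquad hlin y hyL hyη
  have hy : 0 ≤ y := hyL.trans' (Real.exp_pos _).le
  have hmain : 36 * L ^ 2 * y ^ 2 * Real.exp (η / 2 * L - L) ≤ η * c / 4 * y :=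
    calc 36 * L ^ 2 * y ^ 2 * Real.exp (η / 2 * L - L)
        = 36 * L ^ 2 * y * y * Real.exp (η / 2 * L - L) := by ring
      _ ≤ 36 * (η * c / 144 * Real.exp (η / 2 * L)) * y * Real.exp ((1 - η) * L) *
            Real.exp (η / 2 * L - L) := by gcongr
      _ = η * c / 4 * y * Real.exp (η / 2 * L + (1 - η) * L + (η / 2 * L - L)) := by
          rw [Real.exp_add, Real.exp_add]
          ring
      _ = η * c / 4 * y := by ring_nf; simp
  have hgain : η * c / 2 * y ≤ η / 2 * L * max (3 / 2) (c / L * y) :=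
    calc η * c / 2 * y = η / 2 * L * (c / L * y) := by field_simp
      _ ≤ η / 2 * L * max (3 / 2) (c / L * y) := by gcongr; exact le_max_right _ _
  have hlarge : 17 / 16 * L ≤ η * c / 4 * y :=
    calc 17 / 16 * L ≤ 17 / 16 * (η * c * (4 / 17) * Real.exp (1 / 16 * L)) := by
          gcongr; simpa using hlin
      _ = η * c / 4 * Real.exp (L / 16) := by ring_nf
      _ ≤ η * c / 4 * y := by gcongr
  linarith

/-- For small layers a large tilt `θ` exploits that the excess has to reach `3 / 2`; for large
layers a small tilt keeps the quadratic term below the linear gain `θ * (c / L * y)`. -/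
lemma eventually_exists_tilt (hc : 0 < c) (hη : 0 < η) :
    ∀ᶠ L : ℝ in atTop, ∀ y : ℝ, 0 ≤ y → y ≤ Real.exp ((1 - η) * L) →
      ∃ θ : ℝ, 0 ≤ θ ∧
        36 * L ^ 2 * y ^ 2 * Real.exp (θ - L) - θ * max (3 / 2) (c / L * y) ≤ -(17 / 16 * L) := by
  filter_upwards [eventually_ge_atTop 0, eventually_large_tilt_le c,
    eventually_small_tilt_le hc hη] with L hL hlarge hsmall y hy hyη
  rcases le_total y (Real.exp (L / 16)) with hyL | hyL
  · exact ⟨3 / 4 * L, by positivity, hlarge y hy hyL⟩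
  · exact ⟨η / 2 * L, by positivity, hsmall y hyL hyη⟩

end Asymptotics

section UnionBound

open Filter

variable {c δ ε η : ℝ}

lemma tendsto_log_natCast_atTop : Tendsto (fun n : ℕ ↦ Real.log n) atTop atTop :=
  Real.tendsto_log_atTop.comp tendsto_natCast_atTop_atTop

lemma le_two_mul_log_of_pow_le {s k : ℕ} {x : ℝ} (hs : 2 ≤ s) (h : (s : ℝ) ^ k ≤ x) :
    (k : ℝ) ≤ 2 * Real.log x := by
  have hs' : (2 : ℝ) ≤ s := mod_cast hs
  have hpow : (2 : ℝ) ^ k ≤ x := h.trans' (by gcongr)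
  have hlog := Real.log_le_log (by positivity) hpow
  rw [Real.log_pow] at hlog
  nlinarith [Real.log_two_gt_d9, Nat.cast_nonneg (α := ℝ) k]

lemma eventually_card_le_excess_le (hc : 0 < c) (hη : 0 < η) :
    ∀ᶠ n : ℕ in atTop, ∀ s k : ℕ, 2 ≤ s → (s + 1 : ℝ) ≤ Real.log n →
      (s : ℝ) ^ k ≤ (n : ℝ) ^ (1 - η) → ∀ v : Fin n,
      (#{G ∈ regularGraphs (Fin n) (s + 1) |
          max (3 / 2) (c / Real.log n * s ^ k) ≤ excess G v (openBall G v (k + 1))} : ℝ) ≤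
        Real.exp (-(17 / 16 * Real.log n)) * #(regularGraphs (Fin n) (s + 1)) := by
  filter_upwards [eventually_gt_atTop 0,
    tendsto_log_natCast_atTop.eventually (eventually_exists_tilt hc hη),
    tendsto_log_natCast_atTop.eventually
      (eventually_pow_le_mul_exp 0 (by norm_num : (0 : ℝ) < 1 / 24) hη),
    tendsto_log_natCast_atTop.eventually
      (eventually_pow_le_mul_exp 1 (by norm_num : (0 : ℝ) < 1 / 16) one_pos)]
    with n hn htilt hball hlin s k hs hsn hk v
  have hn' : (0 : ℝ) < n := Nat.cast_pos.2 hn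
  rw [pow_one, one_mul, Real.exp_log hn'] at hlin
  rw [Real.rpow_def_of_pos hn', mul_comm] at hk
  have hcard : 4 * (3 * s ^ k + 1 + (s + 1)) ≤ n := by
    have hpow : (s : ℝ) ^ k ≤ n / 24 :=
      calc (s : ℝ) ^ k ≤ Real.exp ((1 - η) * Real.log n) := hk
        _ ≤ 1 / 24 * Real.exp (η * Real.log n) * Real.exp ((1 - η) * Real.log n) :=
            le_mul_of_one_le_left (Real.exp_pos _).le (by simpa using hball)
        _ = n / 24 := by
            rw [mul_assoc, ← Real.exp_add, ← add_mul, add_sub_cancel, one_mul, Real.exp_log hn']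
            ring
    have hs' : (2 : ℝ) ≤ s := mod_cast hs
    rify
    linarith
  obtain ⟨θ, hθ, hexp⟩ := htilt (s ^ k) (by positivity) hk
  have htail := card_le_excess_openBall_succ_le (V := Fin n) (v := v) hs hθ
    (by simpa using hsn) (by simpa using hcard) (max (3 / 2) (c / Real.log n * s ^ k))
  rw [Fintype.card_fin] at htail
  exact htail.trans (by gcongr)

lemma exists_le_excess_of_layerEdges_lt {V : Type*} [Fintype V] {G : SimpleGraph V} {v : V}
    {s i : ℕ} {L : ℝ} (hs : 2 ≤ s) (hG : G.IsRegularOfDegree (s + 1)) (hε : 0 < ε) (hε₁ : ε ≤ 1)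
    (hL : 1 ≤ L) (hi : 12 / ε ≤ (s : ℝ) ^ i) (hiL : i ≤ 2 * L)
    (h : layerEdges G v i < (s - ε) * #(layer G v i)) :
    ∃ j ≤ i, max (3 / 2) (ε / 8 / L * s ^ j) ≤ excess G v (openBall G v (j + 1)) := by
  contrapose! h
  refine sub_mul_card_layer_le_layerEdges hs hG hε (by positivity)
    (div_le_self (by positivity) hL) ?_ hi h
  calc ε / 8 / L * i ≤ ε / 8 / L * (2 * L) := by gcongr
    _ = ε / 4 := by field_simp; norm_num
    _ ≤ 1 / 4 := by gcongr

lemma card_layerEdges_lt_le {V : Type*} [Fintype V] {v : V} {s : ℕ} {L x p : ℝ} (hs : 2 ≤ s)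
    (hε : 0 < ε) (hε₁ : ε ≤ 1) (hL : 1 ≤ L) (hx : Real.log x ≤ L) (hp : 0 ≤ p)
    (htail : ∀ k, (s : ℝ) ^ k ≤ x → (#{G ∈ regularGraphs V (s + 1) |
      max (3 / 2) (ε / 8 / L * s ^ k) ≤ excess G v (openBall G v (k + 1))} : ℝ) ≤ p) :
    (#{G ∈ regularGraphs V (s + 1) | ∃ i, 12 / ε ≤ (s : ℝ) ^ i ∧ (s : ℝ) ^ i ≤ x ∧
      layerEdges G v i < (s - ε) * #(layer G v i)} : ℝ) ≤ 3 * L * p := by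
  set C := regularGraphs V (s + 1)
  set exceeding : ℕ → Finset (SimpleGraph V) := fun k ↦
    {G ∈ C | max (3 / 2) (ε / 8 / L * s ^ k) ≤ excess G v (openBall G v (k + 1))}
  set levels : Finset ℕ := {k ∈ range (⌊2 * L⌋₊ + 1) | (s : ℝ) ^ k ≤ x}
  have hs' : (1 : ℝ) ≤ s := mod_cast (by omega : 1 ≤ s)
  have hsub : {G ∈ C | ∃ i, 12 / ε ≤ (s : ℝ) ^ i ∧ (s : ℝ) ^ i ≤ x ∧
      layerEdges G v i < (s - ε) * #(layer G v i)} ⊆ levels.biUnion exceeding := by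
    intro G hG
    obtain ⟨hG, i, hi, hix, hlt⟩ := mem_filter.1 hG
    have hiL : (i : ℝ) ≤ 2 * L := (le_two_mul_log_of_pow_le hs hix).trans (by gcongr)
    obtain ⟨j, hji, hj⟩ := exists_le_excess_of_layerEdges_lt hs (mem_regularGraphs.1 hG) hε hε₁ hL
      hi hiL hlt
    have hjL : j < ⌊2 * L⌋₊ + 1 := Nat.lt_succ_iff.2 (hji.trans (Nat.le_floor hiL))
    exact mem_biUnion.2 ⟨j, mem_filter.2 ⟨mem_range.2 hjL,
      (pow_le_pow_right₀ hs' hji).trans hix⟩, mem_filter.2 ⟨hG, hj⟩⟩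
  have hcard : (#levels : ℝ) ≤ 3 * L :=
    calc (#levels : ℝ) ≤ (⌊2 * L⌋₊ + 1 : ℕ) :=
          Nat.cast_le.2 ((card_filter_le _ _).trans_eq (card_range _))
      _ ≤ 3 * L := by
          push_cast
          linarith [Nat.floor_le (by linarith : 0 ≤ 2 * L)]
  calc (#{G ∈ C | ∃ i, 12 / ε ≤ (s : ℝ) ^ i ∧ (s : ℝ) ^ i ≤ x ∧
          layerEdges G v i < (s - ε) * #(layer G v i)} : ℝ)
      ≤ ∑ k ∈ levels, (#(exceeding k) : ℝ) := by
        rw [← Nat.cast_sum]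
        exact Nat.cast_le.2 ((card_le_card hsub).trans card_biUnion_le)
    _ ≤ #levels * p := by
        rw [← nsmul_eq_mul]
        exact sum_le_card_nsmul _ _ _ fun k hk ↦ htail k (mem_filter.1 hk).2
    _ ≤ 3 * L * p := by gcongr

lemma eventually_card_layerEdges_lt_le (hε : 0 < ε) (hε₁ : ε ≤ 1) (hη : 0 < η) (hδ : 0 < δ) :
    ∀ᶠ n : ℕ in atTop, ∀ s : ℕ, 2 ≤ s → (s + 1 : ℝ) ≤ Real.log n → ∀ v : Fin n,
      (#{G ∈ regularGraphs (Fin n) (s + 1) | ∃ i, 12 / ε ≤ (s : ℝ) ^ i ∧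
          (s : ℝ) ^ i ≤ (n : ℝ) ^ (1 - η) ∧
          layerEdges G v i < (s - ε) * #(layer G v i)} : ℝ) ≤
        δ / n * #(regularGraphs (Fin n) (s + 1)) := by
  filter_upwards [eventually_gt_atTop 0, tendsto_log_natCast_atTop.eventually_ge_atTop 1,
    eventually_card_le_excess_le (by positivity : 0 < ε / 8) hη,
    tendsto_log_natCast_atTop.eventually (eventually_pow_le_mul_exp 1 (by positivity : 0 < δ / 3)
      (by norm_num : (0 : ℝ) < 1 / 16))] with n hn hL htail hlin s hs hsn v
  set L := Real.log n
  set C := regularGraphs (Fin n) (s + 1)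
  have hn' : (0 : ℝ) < n := Nat.cast_pos.2 hn
  have hlogx : Real.log ((n : ℝ) ^ (1 - η)) ≤ L := by
    rw [Real.log_rpow hn']
    exact mul_le_of_le_one_left (by linarith) (by linarith)
  refine (card_layerEdges_lt_le hs hε hε₁ hL hlogx (by positivity)
    fun k hk ↦ htail s k hs hsn hk v).trans ?_
  calc 3 * L * (Real.exp (-(17 / 16 * L)) * #C)
      ≤ 3 * (δ / 3 * Real.exp (1 / 16 * L)) * (Real.exp (-(17 / 16 * L)) * #C) := by
        gcongr
        simpa using hlin
    _ = δ * Real.exp (-L) * #C := by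
        rw [show -L = 1 / 16 * L + -(17 / 16 * L) by ring, Real.exp_add]
        ring
    _ = δ / n * #C := by rw [Real.exp_neg, Real.exp_log hn', div_eq_mul_inv]

end UnionBound

section Regular

variable {V : Type} [Fintype V] {G : SimpleGraph V} {v : V} {r k : ℕ}

lemma isRegularGraph_iff : IsRegularGraph G r ↔ G.IsRegularOfDegree r := by
  refine forall_congr' fun v ↦ ?_
  rw [← G.card_neighborSet_eq_degree, ← Nat.card_eq_fintype_card]
  rfl

lemma coe_layer : (layer G v k : Set V) = sphere G v k := by
  ext u
  rw [mem_coe, mem_layer]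
  constructor
  · intro h
    have hvu : G.Reachable v u := SimpleGraph.reachable_of_edist_ne_top (by simp [h])
    exact ⟨hvu, by exact_mod_cast hvu.coe_dist_eq_edist.trans h⟩
  · rintro ⟨hvu, h⟩
    rw [← hvu.coe_dist_eq_edist, h]

lemma card_sphere : Nat.card (sphere G v k) = #(layer G v k) := by
  rw [← coe_layer, Nat.card_coe_set_eq, Set.ncard_coe_finset]

lemma crossEdges_eq_layerEdges : crossEdges G v k = layerEdges G v k :=
  Nat.subtype_card _ fun p ↦ by
    rw [SimpleGraph.mem_interedges_iff, ← coe_layer, ← coe_layer, mem_coe, mem_coe]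

end Regular

section Window

variable {b c x ε : ℝ} {i : ℕ}

lemma rpow_lt_pow_of_mul_log_div_log_lt (hb : 1 < b) (hx : 0 < x)
    (h : c * Real.log x / Real.log b < i) : x ^ c < b ^ i := by
  rw [div_lt_iff₀ (Real.log_pos hb)] at h
  rwa [← Real.log_lt_log_iff (by positivity) (by positivity), Real.log_rpow hx, Real.log_pow]

lemma pow_lt_rpow_of_lt_mul_log_div_log (hb : 1 < b) (hx : 0 < x)
    (h : i < c * Real.log x / Real.log b) : b ^ i < x ^ c := by
  rw [lt_div_iff₀ (Real.log_pos hb)] at h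
  rwa [← Real.log_lt_log_iff (by positivity) (by positivity), Real.log_rpow hx, Real.log_pow]

lemma pow_mem_Icc_of_window (hε₀ : 0 < ε) (hε₁ : ε < 1) (hb : 2 ≤ b) (hx : (12 / ε) ^ 2 ≤ x)
    (hlower : 1 / 2 * Real.log x / Real.log (b - ε) < i)
    (hupper : i < (2 / 3 - ε) * Real.log x / Real.log b) :
    b ^ i ∈ Set.Icc (12 / ε) (x ^ (1 - 1 / 3 : ℝ)) := by
  have hx₁ : 1 ≤ x := hx.trans' (one_le_pow₀ ((one_le_div hε₀).2 (by linarith)))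
  constructor
  · calc 12 / ε ≤ x ^ (1 / 2 : ℝ) := by
          rw [← Real.sqrt_eq_rpow]
          exact Real.le_sqrt_of_sq_le hx
      _ ≤ (b - ε) ^ i := (rpow_lt_pow_of_mul_log_div_log_lt (by linarith) (by linarith) hlower).le
      _ ≤ b ^ i := pow_le_pow_left₀ (by linarith) (by linarith) i
  · calc b ^ i ≤ x ^ (2 / 3 - ε) :=
          (pow_lt_rpow_of_lt_mul_log_div_log (by linarith) (by linarith) hupper).le
      _ ≤ x ^ (1 - 1 / 3 : ℝ) := Real.rpow_le_rpow_of_exponent_le hx₁ (by linarith)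

end Window

section Pairs

open Filter

lemma one_sub_two_mul_mul_sq_card_le {α : Type*} (C : Finset α) (P Q : α → Prop) {p : ℝ}
    (hP : (#{x ∈ C | ¬ P x} : ℝ) ≤ p * #C) (hQ : (#{x ∈ C | ¬ Q x} : ℝ) ≤ p * #C) :
    (1 - 2 * p) * (#C : ℝ) ^ 2 ≤ #({x ∈ C | P x} ×ˢ {x ∈ C | Q x}) := by
  have hcard (R : α → Prop) : (#{x ∈ C | R x} : ℝ) = #C - #{x ∈ C | ¬ R x} := by
    rw [eq_sub_iff_add_eq]
    exact mod_cast card_filter_add_card_filter_not R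
  rw [card_product, Nat.cast_mul, hcard P, hcard Q]
  have hnonneg : (0 : ℝ) ≤ #{x ∈ C | ¬ P x} * #{x ∈ C | ¬ Q x} := by positivity
  have hC : (0 : ℝ) ≤ #C := by positivity
  nlinarith [mul_le_mul_of_nonneg_left hP hC, mul_le_mul_of_nonneg_left hQ hC]

theorem boundary_edges_abundant_whp_general {ε η δ : ℝ} (hε : 0 < ε) (hε₁ : ε ≤ 1) (hη : 0 < η)
    (hδ : 0 < δ) :
    ∀ᶠ n : ℕ in atTop, ∀ r : ℕ, 3 ≤ r → (r : ℝ) ≤ Real.log n → ∀ v₁ v₂ : Fin n,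
      (1 - δ / n) * (Nat.card {G : SimpleGraph (Fin n) // IsRegularGraph G r} : ℝ) ^ 2 ≤
        (Nat.card {p : SimpleGraph (Fin n) × SimpleGraph (Fin n) //
          IsRegularGraph p.1 r ∧ IsRegularGraph p.2 r ∧
          ∀ i : ℕ, 12 / ε ≤ ((r : ℝ) - 1) ^ i → ((r : ℝ) - 1) ^ i ≤ (n : ℝ) ^ (1 - η) →
            (((r : ℝ) - 1 - ε) * (Nat.card ↥(sphere p.1 v₁ i) : ℝ) ≤
                (crossEdges p.1 v₁ i : ℝ)) ∧
            (((r : ℝ) - 1 - ε) * (Nat.card ↥(sphere p.2 v₂ i) : ℝ) ≤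
                (crossEdges p.2 v₂ i : ℝ))} : ℝ) := by
  filter_upwards [eventually_card_layerEdges_lt_le hε hε₁ hη (half_pos hδ)]
    with n hn r hr hrn v₁ v₂
  obtain ⟨s, rfl⟩ : ∃ s, r = s + 1 := ⟨r - 1, by omega⟩
  have hcard : Nat.card {G : SimpleGraph (Fin n) // IsRegularGraph G (s + 1)} =
      #(regularGraphs (Fin n) (s + 1)) :=
    Nat.subtype_card _ fun G ↦ by rw [mem_regularGraphs, isRegularGraph_iff]
  let Abundant (v : Fin n) (G : SimpleGraph (Fin n)) : Prop := ∀ i, 12 / ε ≤ (s : ℝ) ^ i →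
    (s : ℝ) ^ i ≤ (n : ℝ) ^ (1 - η) → (s - ε) * #(layer G v i) ≤ layerEdges G v i
  have hrare (v : Fin n) : (#{G ∈ regularGraphs (Fin n) (s + 1) | ¬ Abundant v G} : ℝ) ≤
      δ / 2 / n * #(regularGraphs (Fin n) (s + 1)) := by
    simpa [Abundant] using hn s (by omega) (by simpa using hrn) v
  have hpairs := one_sub_two_mul_mul_sq_card_le _ _ _ (hrare v₁) (hrare v₂)
  rw [hcard]
  convert hpairs using 2
  · ring
  · refine Nat.subtype_card _ fun p ↦ ?_
    simp only [mem_product, mem_filter, mem_regularGraphs, isRegularGraph_iff, card_sphere,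
      crossEdges_eq_layerEdges, Abundant, Nat.cast_succ, add_sub_cancel_right, imp_and, forall_and]
    tauto

end Pairs

end

/-- Lemma A.1, second part.  Fix `0 < ε < 1`.  For every `δ > 0` there is `N`
such that for all `n ≥ N`, all `3 ≤ r < (2 log n)^{1/2}` with `rn` even, and any fixed vertices
`v₁, v₂`: if `G₁, G₂` are drawn independently uniformly from the `r`-regular simple graphs on
`{1,…,n}`, then with probability at least `1 - δ/n`, for every integer `i` with
`(1/2) log n / log(r-1-ε) < i < (2/3 - ε) log n / log(r-1)` and each `j ∈ {1,2}`, the number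
of edges between `Q_{v_j,G_j}^i` and `Q_{v_j,G_j}^{i+1}` is at least
`(r - 1 - ε)·|Q_{v_j,G_j}^i|`. -/
theorem boundary_edges_abundant_whp (ε : ℝ) (hε0 : 0 < ε) (hε1 : ε < 1) :
    ∀ δ : ℝ, 0 < δ → ∃ N : ℕ, ∀ n : ℕ, N ≤ n → ∀ r : ℕ, 3 ≤ r →
      (r : ℝ) < Real.sqrt (2 * Real.log n) → Even (r * n) → ∀ v₁ v₂ : Fin n,
      (1 - δ / n) * (Nat.card {G : SimpleGraph (Fin n) // IsRegularGraph G r} : ℝ) ^ 2 ≤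
        (Nat.card {p : SimpleGraph (Fin n) × SimpleGraph (Fin n) //
          IsRegularGraph p.1 r ∧ IsRegularGraph p.2 r ∧
          ∀ i : ℕ, (1 : ℝ) / 2 * Real.log n / Real.log ((r : ℝ) - 1 - ε) < (i : ℝ) →
            (i : ℝ) < ((2 : ℝ) / 3 - ε) * Real.log n / Real.log ((r : ℝ) - 1) →
            (((r : ℝ) - 1 - ε) * (Nat.card ↥(sphere p.1 v₁ i) : ℝ) ≤
                (crossEdges p.1 v₁ i : ℝ)) ∧
            (((r : ℝ) - 1 - ε) * (Nat.card ↥(sphere p.2 v₂ i) : ℝ) ≤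
                (crossEdges p.2 v₂ i : ℝ))} : ℝ) := by
  intro δ hδ
  obtain ⟨N, hN⟩ := Filter.eventually_atTop.1 <|
    (boundary_edges_abundant_whp_general hε0 hε1.le (by norm_num : (0 : ℝ) < 1 / 3) hδ).and <|
    (tendsto_log_natCast_atTop.eventually_ge_atTop 2).and <|
    tendsto_natCast_atTop_atTop.eventually_ge_atTop ((12 / ε) ^ 2)
  refine ⟨N, fun n hn r hr hrn _ v₁ v₂ ↦ ?_⟩
  obtain ⟨hgeneral, hlog₂, hlarge⟩ := hN n hn
  have hrlog : (r : ℝ) ≤ Real.log n :=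
    hrn.le.trans <| Real.sqrt_le_iff.2 ⟨by linarith, by nlinarith⟩
  have hr₁ : (2 : ℝ) ≤ r - 1 := by
    have : (3 : ℝ) ≤ r := mod_cast hr
    linarith
  refine (hgeneral r hr hrlog v₁ v₂).trans <| Nat.cast_le.2 <|
    Nat.card_le_card_of_injective (Subtype.map id ?_)
      (Subtype.map_injective _ Function.injective_id)
  rintro p ⟨h₁, h₂, hp⟩
  refine ⟨h₁, h₂, fun i hlower hupper ↦ ?_⟩
  have hi := pow_mem_Icc_of_window hε0 hε1 hr₁ hlarge hlower hupper
  exact hp i hi.1 hi.2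
end

section
/- Let G be a finite r-regular simple graph with r ≥ 2, let v be a vertex of G, let K ≥ 1, and let 0 ≤ ε. Suppose the number of edges of G with one endpoint in Q_{v,G}^K and the other endpoint in Q_{v,G}^{K+1} is at least (r − 1 − ε)·|Q_{v,G}^K|. Then at least (1 − ε)·|Q_{v,G}^K| vertices of Q_{v,G}^K have degree exactly 1 in the induced subgraph B_G(v,K). -/
/-!
A vertex of `Q_{v,G}^K`, `K ≥ 1`, has a neighbour in `Q_{v,G}^{K-1}`, hence degree at least `1` in
`B_G(v,K)`, and so at most `r - 1` neighbours in `Q_{v,G}^{K+1}`; if its degree in `B_G(v,K)` is not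
exactly `1`, it has at most `r - 2`. Summing over `Q_{v,G}^K`, the number of edges to
`Q_{v,G}^{K+1}` is at most `(r - 2)·|Q_{v,G}^K|` plus the number of vertices of degree exactly `1`.
-/

section DegreeInto

variable {V : Type*} (G : SimpleGraph V)

/-- The number of neighbours of `u` in `S`. For `u ∈ S` this is the degree of `u` in the subgraph of
`G` induced by `S`. -/
noncomputable def degreeInto (S : Set V) (u : V) : ℕ :=
  Nat.card {w : V // w ∈ S ∧ G.Adj u w}

variable {G} {S T : Set V} {u : V}

lemma degreeInto_eq_ncard : degreeInto G S u = (S ∩ G.neighborSet u).ncard :=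
  rfl

lemma degreeInto_pos [Finite (G.neighborSet u)] {w : V} (hw : w ∈ S) (huw : G.Adj u w) :
    0 < degreeInto G S u := by
  rw [degreeInto_eq_ncard, Set.ncard_pos (Set.toFinite _)]
  exact ⟨w, hw, huw⟩

lemma degreeInto_add_degreeInto_le_degree [Fintype (G.neighborSet u)] (hST : Disjoint S T) :
    degreeInto G S u + degreeInto G T u ≤ G.degree u := by
  rw [degreeInto_eq_ncard, degreeInto_eq_ncard, ← G.card_neighborSet_eq_degree,
    ← Nat.card_eq_fintype_card, Nat.card_coe_set_eq,
    ← Set.ncard_union_eq (hST.mono Set.inter_subset_left Set.inter_subset_left)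
      (Set.toFinite _) (Set.toFinite _)]
  exact Set.ncard_le_ncard
    (Set.union_subset Set.inter_subset_right Set.inter_subset_right) (Set.toFinite _)

lemma card_adj_pairs_eq_sum_degreeInto [Fintype S] [∀ u, Finite (G.neighborSet u)] :
    Nat.card {p : V × V // p.1 ∈ S ∧ p.2 ∈ T ∧ G.Adj p.1 p.2} = ∑ u : S, degreeInto G T u := by
  have (u : V) : Finite {w : V // w ∈ T ∧ G.Adj u w} :=
    Finite.Set.finite_inter_of_right T (G.neighborSet u)
  simp only [degreeInto]
  rw [← Nat.card_sigma]
  exact Nat.card_congr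
    { toFun p := ⟨⟨p.1.1, p.2.1⟩, p.1.2, p.2.2⟩
      invFun q := ⟨(q.1, q.2), q.1.2, q.2.2⟩ }

end DegreeInto

lemma sum_add_two_mul_card_le {ι : Type*} [Fintype ι] {a b : ι → ℕ} {r : ℕ}
    (hb : ∀ i, 0 < b i) (hab : ∀ i, a i + b i ≤ r) :
    ∑ i, a i + 2 * Nat.card ι ≤ r * Nat.card ι + Nat.card {i // b i = 1} := by
  classical
  calc ∑ i, a i + 2 * Nat.card ι
    _ = ∑ i, (a i + 2) := by simp [Finset.sum_add_distrib, mul_comm]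
    _ ≤ ∑ i, (r + if b i = 1 then 1 else 0) := by
      refine Finset.sum_le_sum fun i _ ↦ ?_
      have := hb i
      have := hab i
      split_ifs <;> lia
    _ = r * Nat.card ι + Nat.card {i // b i = 1} := by
      simp [Finset.sum_add_distrib, Fintype.card_subtype, mul_comm]

section Sphere

variable {V : Type} {G : SimpleGraph V} {u v : V} {h k r : ℕ}

lemma sphere_zero : sphere G v 0 = {v} := by
  ext u
  constructor
  · rintro ⟨hvu, hdist⟩
    exact (hvu.dist_eq_zero_iff.mp hdist).symm
  · rintro rfl
    exact ⟨.refl _, SimpleGraph.dist_self⟩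

lemma sphere_subset_ball (hkh : k ≤ h) : sphere G v k ⊆ ball G v h :=
  fun _ hu ↦ ⟨hu.1, hu.2.trans_le hkh⟩

lemma disjoint_sphere_ball (hhk : h < k) : Disjoint (sphere G v k) (ball G v h) :=
  Set.disjoint_left.mpr fun _ hsphere hball ↦ (hball.2.trans_lt hhk).ne hsphere.2

lemma exists_mem_sphere_adj (hu : u ∈ sphere G v (k + 1)) : ∃ w ∈ sphere G v k, G.Adj u w := by
  obtain ⟨hvu, hdist⟩ := hu
  obtain ⟨p, hp⟩ := hvu.symm.exists_walk_length_eq_dist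
  rw [SimpleGraph.dist_comm, hdist] at hp
  cases p with
  | nil => simp at hp
  | @cons _ w _ huw q =>
    have hvw_le : G.dist v w ≤ k := by
      rw [SimpleGraph.dist_comm]
      exact (SimpleGraph.dist_le q).trans_eq (Nat.succ.inj hp)
    have := huw.symm.diff_dist_adj (u := v)
    exact ⟨w, ⟨q.reachable.symm, by lia⟩, huw⟩

lemma finite_sphere [∀ u, Finite (G.neighborSet u)] : (sphere G v k).Finite := by
  induction k with
  | zero => simp only [sphere_zero, Set.finite_singleton]
  | succ k ih =>
    refine (ih.biUnion fun w _ ↦ (G.neighborSet w).toFinite).subset fun u hu ↦ ?_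
    obtain ⟨w, hw, huw⟩ := exists_mem_sphere_adj hu
    exact Set.mem_biUnion hw huw.symm

lemma degreeInto_ball_pos [Finite (G.neighborSet u)] (hk : 1 ≤ k) (hu : u ∈ sphere G v k) :
    0 < degreeInto G (ball G v k) u := by
  obtain ⟨j, rfl⟩ := Nat.exists_eq_add_of_le' hk
  obtain ⟨w, hw, huw⟩ := exists_mem_sphere_adj hu
  exact degreeInto_pos (sphere_subset_ball j.le_succ hw) huw

lemma crossEdges_add_two_mul_card_sphere_le [G.LocallyFinite] (hk : 1 ≤ k)
    (hdeg : ∀ u ∈ sphere G v k, G.degree u ≤ r) :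
    crossEdges G v k + 2 * Nat.card (sphere G v k) ≤ r * Nat.card (sphere G v k) +
      Nat.card {u : V // u ∈ sphere G v k ∧ degreeInto G (ball G v k) u = 1} := by
  have := (finite_sphere (G := G) (v := v) (k := k)).fintype
  rw [crossEdges, card_adj_pairs_eq_sum_degreeInto,
    ← Nat.card_congr (Equiv.subtypeSubtypeEquivSubtypeInter _ _)]
  exact sum_add_two_mul_card_le (fun u ↦ degreeInto_ball_pos hk u.2) fun u ↦
    (degreeInto_add_degreeInto_le_degree (disjoint_sphere_ball k.lt_succ_self)).trans
      (hdeg u u.2)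

end Sphere

lemma IsRegularGraph.degree_eq {V : Type} {G : SimpleGraph V} {r : ℕ} (hreg : IsRegularGraph G r)
    (u : V) [Fintype (G.neighborSet u)] : G.degree u = r := by
  rw [← hreg u, ← G.card_neighborSet_eq_degree, ← Nat.card_eq_fintype_card]
  rfl

theorem boundary_vertices_degree_one_general {V : Type} (G : SimpleGraph V) [G.LocallyFinite]
    (r : ℕ) (v : V) (K : ℕ) (hK : 1 ≤ K) (hdeg : ∀ u ∈ sphere G v K, G.degree u ≤ r) (ε : ℝ)
    (hcross : ((r : ℝ) - 1 - ε) * (Nat.card ↥(sphere G v K) : ℝ) ≤ (crossEdges G v K : ℝ)) :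
    (1 - ε) * (Nat.card ↥(sphere G v K) : ℝ) ≤
      (Nat.card {u : V // u ∈ sphere G v K ∧
        Nat.card {w : V // w ∈ ball G v K ∧ G.Adj u w} = 1} : ℝ) := by
  have hcount : (crossEdges G v K : ℝ) + 2 * Nat.card (sphere G v K) ≤
      r * Nat.card (sphere G v K) +
        Nat.card {u : V // u ∈ sphere G v K ∧ degreeInto G (ball G v K) u = 1} := by
    exact_mod_cast crossEdges_add_two_mul_card_sphere_le hK hdeg
  simp only [degreeInto] at hcount
  linarith

/-- Let `G` be finite `r`-regular with `r ≥ 2`, `K ≥ 1`, `ε ≥ 0`.  If the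
number of edges between `Q_{v,G}^K` and `Q_{v,G}^{K+1}` is at least `(r-1-ε)·|Q_{v,G}^K|`,
then at least `(1-ε)·|Q_{v,G}^K|` vertices of `Q_{v,G}^K` have degree exactly `1` in the
induced subgraph `B_G(v,K)`. -/
theorem boundary_vertices_degree_one {V : Type} [Finite V] (G : SimpleGraph V) (r : ℕ)
    (hr : 2 ≤ r) (hreg : IsRegularGraph G r) (v : V) (K : ℕ) (hK : 1 ≤ K) (ε : ℝ)
    (hε : 0 ≤ ε)
    (hcross : ((r : ℝ) - 1 - ε) * (Nat.card ↥(sphere G v K) : ℝ) ≤ (crossEdges G v K : ℝ)) :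
    (1 - ε) * (Nat.card ↥(sphere G v K) : ℝ) ≤
      (Nat.card {u : V // u ∈ sphere G v K ∧
        Nat.card {w : V // w ∈ ball G v K ∧ G.Adj u w} = 1} : ℝ) := by
  have : G.LocallyFinite := fun _ ↦ Fintype.ofFinite _
  exact boundary_vertices_degree_one_general G r v K hK (fun u _ ↦ (hreg.degree_eq u).le) ε hcross
end

section
/- Let G₁, G₂ be finite simple graphs with vertices v₁ and v₂ respectively, and let h ∈ ℕ. If there is a graph isomorphism from the induced subgraph B_{G₁}(v₁,h) to the induced subgraph B_{G₂}(v₂,h) mapping v₁ to v₂, then for every t ≤ h the t-round WL colors of v₁ in G₁ and of v₂ in G₂ are equal: c_t^{G₁}(v₁) = c_t^{G₂}(v₂). That is, the t-round WL color of a vertex depends only on the rooted isomorphism type of its height-h rooted subgraph, for all t ≤ h. -/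
/-!
The first `t` rounds of refinement at `v` only consult vertices joined to `v` by a walk of length at
most `t`, so an embedding `e` of graphs preserves the `t`-round color of `v` as soon as its range
contains the ball of radius `t` around `e v`. The subgraph `B_{G₁}(v₁, h)` embeds in this way both
into `G₁`, by inclusion, and into `G₂`, through the given isomorphism; hence `v₁` and `v₂` both have
the color of the root of that subgraph.
-/

section Ball

variable {V : Type} {G : SimpleGraph V} {u v : V}

lemma mem_ball_iff_exists_walk {r : ℕ} : u ∈ ball G v r ↔ ∃ p : G.Walk v u, p.length ≤ r := by
  constructor
  · rintro ⟨hreach, hdist⟩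
    obtain ⟨p, hp⟩ := hreach.exists_walk_length_eq_dist
    exact ⟨p, hp.trans_le hdist⟩
  · rintro ⟨p, hp⟩
    exact ⟨p.reachable, (SimpleGraph.dist_le p).trans hp⟩

lemma ball_mono (G : SimpleGraph V) (v : V) : Monotone (ball G v) :=
  fun _ _ hrs _ hu => ⟨hu.1, hu.2.trans hrs⟩

lemma ball_subset_ball_succ_of_adj (huv : G.Adj v u) (r : ℕ) : ball G u r ⊆ ball G v (r + 1) := by
  intro w hw
  obtain ⟨p, hp⟩ := mem_ball_iff_exists_walk.mp hw
  exact mem_ball_iff_exists_walk.mpr ⟨p.cons huv, Nat.succ_le_succ hp⟩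

lemma neighborSet_subset_ball_succ (G : SimpleGraph V) (v : V) (r : ℕ) :
    G.neighborSet v ⊆ ball G v (r + 1) :=
  fun u hu => ball_subset_ball_succ_of_adj hu r (self_mem_ball G u r)

end Ball

section Embedding

variable {V W : Type} {G : SimpleGraph V} {H : SimpleGraph W}

lemma image_neighborSet_of_subset_range (e : G ↪g H) {v : V}
    (hv : H.neighborSet (e v) ⊆ Set.range e) : e '' G.neighborSet v = H.neighborSet (e v) := by
  rw [← e.preimage_neighborSet, Set.image_preimage_eq_of_subset hv]

lemma map_wlColor_neighborSet_of_subset_range [Finite V] [Finite W] (e : G ↪g H) {v : V} {t : ℕ}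
    (hv : H.neighborSet (e v) ⊆ Set.range e)
    (hcolor : ∀ u ∈ G.neighborSet v, wlColor H t (e u) = wlColor G t u) :
    (H.neighborSet (e v)).toFinite.toFinset.val.map (wlColor H t) =
      (G.neighborSet v).toFinite.toFinset.val.map (wlColor G t) := by
  have hnbrs : (H.neighborSet (e v)).toFinite.toFinset =
      (G.neighborSet v).toFinite.toFinset.map e.toEmbedding := by
    ext w
    simp [← image_neighborSet_of_subset_range e hv]
  rw [hnbrs, Finset.map_val, Multiset.map_map]
  exact Multiset.map_congr rfl fun u hu => hcolor u (by simpa using hu)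

theorem wlColor_apply_of_ball_subset_range [Finite V] [Finite W] (e : G ↪g H) {t : ℕ} {v : V}
    (hball : ball H (e v) t ⊆ Set.range e) : wlColor H t (e v) = wlColor G t v := by
  induction t generalizing v with
  | zero => rfl
  | succ t ih =>
    refine Prod.ext (ih ((ball_mono H (e v) t.le_succ).trans hball)) ?_
    refine map_wlColor_neighborSet_of_subset_range e
      ((neighborSet_subset_ball_succ H (e v) t).trans hball) fun u hu => ih ?_
    exact (ball_subset_ball_succ_of_adj (e.map_adj_iff.mpr hu) t).trans hball

end Embedding

/-- If there is a graph isomorphism from `B_{G₁}(v₁,h)` to `B_{G₂}(v₂,h)`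
mapping `v₁` to `v₂`, then `c_t^{G₁}(v₁) = c_t^{G₂}(v₂)` for every `t ≤ h`: the `t`-round WL
color of a vertex depends only on the rooted isomorphism type of its height-`h` rooted
subgraph, for all `t ≤ h`. -/
theorem wlColor_eq_of_ball_iso {V₁ V₂ : Type} [Finite V₁] [Finite V₂]
    (G₁ : SimpleGraph V₁) (G₂ : SimpleGraph V₂) (v₁ : V₁) (v₂ : V₂) (h : ℕ)
    (f : G₁.induce (ball G₁ v₁ h) ≃g G₂.induce (ball G₂ v₂ h))
    (hf : (f ⟨v₁, self_mem_ball G₁ v₁ h⟩ : V₂) = v₂) :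
    ∀ t : ℕ, t ≤ h → wlColor G₁ t v₁ = wlColor G₂ t v₂ := by
  intro t ht
  let root : ball G₁ v₁ h := ⟨v₁, self_mem_ball G₁ v₁ h⟩
  let e₁ : G₁.induce (ball G₁ v₁ h) ↪g G₁ := SimpleGraph.Embedding.induce _
  let e₂ : G₁.induce (ball G₁ v₁ h) ↪g G₂ :=
    (SimpleGraph.Embedding.induce _).comp f.toEmbedding
  have hroot : e₂ root = v₂ := hf
  have hball₁ : ball G₁ (e₁ root) t ⊆ Set.range e₁ :=
    fun u hu => ⟨⟨u, ball_mono G₁ v₁ ht hu⟩, rfl⟩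
  have hball₂ : ball G₂ (e₂ root) t ⊆ Set.range e₂ := by
    rw [hroot]
    intro w hw
    exact ⟨f.symm ⟨w, ball_mono G₂ v₂ ht hw⟩, congrArg Subtype.val (f.apply_symm_apply _)⟩
  calc
    wlColor G₁ t v₁ = wlColor (G₁.induce (ball G₁ v₁ h)) t root :=
      wlColor_apply_of_ball_subset_range e₁ hball₁
    _ = wlColor G₂ t (e₂ root) := (wlColor_apply_of_ball_subset_range e₂ hball₂).symm
    _ = wlColor G₂ t v₂ := by rw [hroot]
end

section
/- Let G₁ be the 6-vertex simple graph that is the disjoint union of two 3-cycles (two triangles), and let G₂ be the 6-cycle (hexagon). Then: (a) G₁ and G₂ are not isomorphic; (b) for every t ∈ ℕ, the multiset of t-round WL colors of G₁ equals the multiset of t-round WL colors of G₂ (indeed all twelve vertices share one common t-round color); but (c) the (1,1) subgraph-WL graph representations of G₁ and G₂ are different. In particular, the height-1 rooted subgraph of every vertex of G₁ has 3 vertices and 3 edges (a closed triangle), while the height-1 rooted subgraph of every vertex of G₂ has 3 vertices and 2 edges (an open triangle). -/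
/-- The 6-vertex graph consisting of two disjoint triangles: vertices `0,1,2` form one
triangle and `3,4,5` the other. -/
def twoTriangles : SimpleGraph (Fin 6) :=
  SimpleGraph.fromRel (fun u v => (u.val < 3 ↔ v.val < 3))

/-- The 6-cycle (hexagon). -/
def hexagon : SimpleGraph (Fin 6) :=
  SimpleGraph.fromRel (fun u v => v = u + 1)

/-!
All vertices of an `r`-regular graph have the same color in every round, so 1-WL cannot separate
two 2-regular graphs of the same order. A color of positive round does record the degree, so by the
handshake formula the colors within a rooted subgraph determine its number of edges. At height 1
this number is `(d + 1).choose 2` around a vertex of degree `d` whose closed neighborhood is a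
clique, but only `d` in a triangle-free graph such as the hexagon.
-/

/-- The common `t`-round color of all vertices of an `r`-regular graph. -/
def regularWLColor (r : ℕ) : (t : ℕ) → WLColor t
  | 0 => ()
  | t + 1 => (regularWLColor r t, Multiset.replicate r (regularWLColor r t))

/-- The degree of a vertex, read off its color after at least one round as the number of neighbor
colors collected in the last round. -/
def WLColor.degree {t : ℕ} (c : WLColor (t + 1)) : ℕ :=
  Multiset.card c.2

section

variable {V W : Type}

lemma wlColor_succ_degree [Finite V] (G : SimpleGraph V) (t : ℕ) (v : V) :
    (wlColor G (t + 1) v).degree = Nat.card (G.neighborSet v) := by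
  rw [Nat.card_coe_set_eq, Set.ncard_eq_toFinset_card _ (Set.toFinite _)]
  exact Multiset.card_map _ _

lemma IsRegularGraph.wlColor_eq [Finite V] {G : SimpleGraph V} {r : ℕ} (hG : IsRegularGraph G r) :
    ∀ (t : ℕ) (v : V), wlColor G t v = regularWLColor r t
  | 0, _ => rfl
  | t + 1, v => by
    have color_eq : wlColor G t = fun _ => regularWLColor r t := funext (hG.wlColor_eq t)
    have degree_eq : (Set.toFinite {u | G.Adj v u}).toFinset.card = r :=
      (Set.ncard_eq_toFinset_card _ _).symm.trans (hG v)
    rw [wlColor, regularWLColor, color_eq, Multiset.map_const', Finset.card_val, degree_eq]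

lemma IsRegularGraph.graphColorMultiset_eq [Finite V] {G : SimpleGraph V} {r : ℕ}
    (hG : IsRegularGraph G r) (t : ℕ) :
    graphColorMultiset G t = Multiset.replicate (Nat.card V) (regularWLColor r t) := by
  let := Fintype.ofFinite V
  rw [graphColorMultiset, funext (hG.wlColor_eq t), Multiset.map_const', Finset.card_val,
    Finset.card_univ, Nat.card_eq_fintype_card]

lemma sum_degree_graphColorMultiset [Finite V] (G : SimpleGraph V) (t : ℕ) :
    ((graphColorMultiset G (t + 1)).map WLColor.degree).sum = 2 * Nat.card G.edgeSet := by
  classical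
  let := Fintype.ofFinite V
  rw [graphColorMultiset, Multiset.map_map, Nat.card_eq_fintype_card, ← G.edgeFinset_card,
    ← G.sum_degrees_eq_twice_card_edges]
  refine Finset.sum_congr rfl fun v _ => ?_
  rw [Function.comp_apply, wlColor_succ_degree, Nat.card_eq_fintype_card,
    G.card_neighborSet_eq_degree]

lemma card_edgeSet_eq_of_graphColorMultiset_eq [Finite V] [Finite W] {G : SimpleGraph V}
    {H : SimpleGraph W} {t : ℕ}
    (h : graphColorMultiset G (t + 1) = graphColorMultiset H (t + 1)) :
    Nat.card G.edgeSet = Nat.card H.edgeSet := by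
  have doubled : 2 * Nat.card G.edgeSet = 2 * Nat.card H.edgeSet := by
    rw [← sum_degree_graphColorMultiset G t, h, sum_degree_graphColorMultiset]
  exact Nat.eq_of_mul_eq_mul_left two_pos doubled

lemma mem_subgraphWLGraphRep [Finite V] {G : SimpleGraph V} {h L : ℕ}
    {m : Multiset (WLColor L)} :
    m ∈ subgraphWLGraphRep G h L ↔ ∃ v, subgraphWLNodeRep G h L v = m := by
  simp [subgraphWLGraphRep]

lemma exists_card_edgeSet_eq_of_subgraphWLGraphRep_eq [Finite V] [Finite W] {G : SimpleGraph V}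
    {H : SimpleGraph W} {h L : ℕ}
    (hrep : subgraphWLGraphRep G h (L + 1) = subgraphWLGraphRep H h (L + 1)) (v : V) :
    ∃ w, Nat.card (G.induce (ball G v h)).edgeSet = Nat.card (H.induce (ball H w h)).edgeSet := by
  have hv : subgraphWLNodeRep G h (L + 1) v ∈ subgraphWLGraphRep H h (L + 1) :=
    hrep ▸ mem_subgraphWLGraphRep.2 ⟨v, rfl⟩
  obtain ⟨w, hw⟩ := mem_subgraphWLGraphRep.1 hv
  exact ⟨w, card_edgeSet_eq_of_graphColorMultiset_eq hw.symm⟩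

lemma ball_one (G : SimpleGraph V) (v : V) : ball G v 1 = insert v (G.neighborSet v) := by
  ext u
  constructor
  · rintro ⟨hreach, hdist⟩
    rcases Nat.le_one_iff_eq_zero_or_eq_one.1 hdist with hzero | hone
    · exact Or.inl (hreach.dist_eq_zero_iff.1 hzero).symm
    · exact Or.inr (SimpleGraph.dist_eq_one_iff_adj.1 hone)
  · rintro (rfl | hadj)
    · exact self_mem_ball G u 1
    · exact ⟨hadj.reachable, (SimpleGraph.dist_eq_one_iff_adj.2 hadj).le⟩

lemma card_ball_one (G : SimpleGraph V) (v : V) [Finite (G.neighborSet v)] :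
    Nat.card (ball G v 1) = Nat.card (G.neighborSet v) + 1 := by
  rw [ball_one, Nat.card_coe_set_eq, Set.ncard_insert_of_notMem G.notMem_neighborSet_self,
    Nat.card_coe_set_eq]

lemma IsRegularGraph.card_ball_one [Finite V] {G : SimpleGraph V} {r : ℕ}
    (hG : IsRegularGraph G r) (v : V) : Nat.card (ball G v 1) = r + 1 :=
  (_root_.card_ball_one G v).trans (congrArg (· + 1) (hG v))

lemma card_edgeSet_induce_of_isClique {α : Type*} {G : SimpleGraph α} {s : Set α} [Finite s]
    (hs : G.IsClique s) : Nat.card (G.induce s).edgeSet = (Nat.card s).choose 2 := by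
  classical
  let := Fintype.ofFinite s
  rw [SimpleGraph.induce_eq_top.2 hs, Nat.card_eq_fintype_card,
    ← SimpleGraph.edgeFinset_card, SimpleGraph.card_edgeFinset_top_eq_card_choose_two,
    Nat.card_eq_fintype_card]

lemma edgeSet_induce_ball_one_of_cliqueFree {G : SimpleGraph V} (hG : G.CliqueFree 3) (v : V) :
    (G.induce (ball G v 1)).edgeSet =
      (G.induce (ball G v 1)).incidenceSet ⟨v, self_mem_ball G v 1⟩ := by
  classical
  refine Set.Subset.antisymm (fun e he => ⟨he, ?_⟩) (SimpleGraph.incidenceSet_subset _ _)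
  induction e with
  | h a b =>
    by_contra hv
    rw [Sym2.mem_iff, not_or] at hv
    have adj_of_ne (u : ball G v 1) (hu : ⟨v, self_mem_ball G v 1⟩ ≠ u) : G.Adj v u :=
      ((ball_one G v).subset u.2).resolve_left fun h => hu (Subtype.ext h.symm)
    exact hG {v, a.1, b.1} (SimpleGraph.is3Clique_triple_iff.2
      ⟨adj_of_ne a hv.1, adj_of_ne b hv.2, he⟩)

lemma card_neighborSet_induce {α : Type*} {G : SimpleGraph α} {s : Set α} {v : α} (hv : v ∈ s)
    (hs : G.neighborSet v ⊆ s) :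
    Nat.card ((G.induce s).neighborSet ⟨v, hv⟩) = Nat.card (G.neighborSet v) :=
  Nat.card_congr
    { toFun := fun u => ⟨u.1, u.2⟩
      invFun := fun u => ⟨⟨u, hs u.2⟩, u.2⟩
      left_inv := fun _ => rfl
      right_inv := fun _ => rfl }

lemma card_edgeSet_induce_ball_one_of_cliqueFree {G : SimpleGraph V} (hG : G.CliqueFree 3)
    (v : V) : Nat.card (G.induce (ball G v 1)).edgeSet = Nat.card (G.neighborSet v) := by
  classical
  rw [edgeSet_induce_ball_one_of_cliqueFree hG,
    Nat.card_congr (SimpleGraph.incidenceSetEquivNeighborSet _ _)]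
  exact card_neighborSet_induce _ ((Set.subset_insert _ _).trans (ball_one G v).superset)

end

lemma twoTriangles_adj {u v : Fin 6} :
    twoTriangles.Adj u v ↔ u ≠ v ∧ (u.val < 3 ↔ v.val < 3) := by
  rw [twoTriangles, SimpleGraph.fromRel_adj, iff_comm (a := v.val < 3), or_self]

lemma isRegularGraph_twoTriangles : IsRegularGraph twoTriangles 2 := by
  intro v
  simp only [twoTriangles_adj, Nat.card_eq_fintype_card]
  revert v
  decide

lemma isClique_ball_one_twoTriangles (v : Fin 6) :
    twoTriangles.IsClique (ball twoTriangles v 1) := by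
  have same_side {u : Fin 6} (hu : u ∈ ball twoTriangles v 1) : v.val < 3 ↔ u.val < 3 := by
    rcases (ball_one _ v).subset hu with rfl | hadj
    · rfl
    · exact (twoTriangles_adj.1 hadj).2
  exact fun a ha b hb hab => twoTriangles_adj.2 ⟨hab, (same_side ha).symm.trans (same_side hb)⟩

lemma card_edgeSet_induce_ball_one_twoTriangles (v : Fin 6) :
    Nat.card (twoTriangles.induce (ball twoTriangles v 1)).edgeSet = 3 := by
  rw [card_edgeSet_induce_of_isClique (isClique_ball_one_twoTriangles v),
    isRegularGraph_twoTriangles.card_ball_one]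
  rfl

lemma not_cliqueFree_twoTriangles : ¬ twoTriangles.CliqueFree 3 := fun h =>
  h {0, 1, 2} (SimpleGraph.is3Clique_triple_iff.2 (by simp only [twoTriangles_adj]; decide))

lemma hexagon_eq_cycleGraph : hexagon = SimpleGraph.cycleGraph 6 := by
  ext u v
  rw [hexagon, SimpleGraph.fromRel_adj, SimpleGraph.cycleGraph_adj]
  revert u v
  decide

lemma isRegularGraph_hexagon : IsRegularGraph hexagon 2 := by
  rw [hexagon_eq_cycleGraph]
  intro v
  change Nat.card ((SimpleGraph.cycleGraph 6).neighborSet v) = 2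
  rw [Nat.card_eq_fintype_card, SimpleGraph.card_neighborSet_eq_degree,
    SimpleGraph.cycleGraph_degree_three_le]

lemma cliqueFree_hexagon : hexagon.CliqueFree 3 := by
  rw [hexagon_eq_cycleGraph]
  refine SimpleGraph.cliqueFree_of_chromaticNumber_lt ?_
  rw [SimpleGraph.chromaticNumber_cycleGraph_of_even 6 (by norm_num) (by decide)]
  norm_num

lemma card_edgeSet_induce_ball_one_hexagon (v : Fin 6) :
    Nat.card (hexagon.induce (ball hexagon v 1)).edgeSet = 2 :=
  (card_edgeSet_induce_ball_one_of_cliqueFree cliqueFree_hexagon v).trans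
    (isRegularGraph_hexagon v)

/-- Two triangles vs. the hexagon: (a) they are non-isomorphic; (b) for
every `t` all twelve vertices share one common `t`-round WL color, so the multisets of WL
colors agree; (c) their `(1,1)` subgraph-WL graph representations differ.  In particular,
every height-1 rooted subgraph of `twoTriangles` has 3 vertices and 3 edges (a closed
triangle), while every height-1 rooted subgraph of `hexagon` has 3 vertices and 2 edges (an
open triangle). -/
theorem twoTriangles_vs_hexagon :
    (¬ Nonempty (twoTriangles ≃g hexagon)) ∧
    (∀ t : ℕ, (∃ c : WLColor t, (∀ v : Fin 6, wlColor twoTriangles t v = c) ∧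
        (∀ v : Fin 6, wlColor hexagon t v = c)) ∧
      graphColorMultiset twoTriangles t = graphColorMultiset hexagon t) ∧
    subgraphWLGraphRep twoTriangles 1 1 ≠ subgraphWLGraphRep hexagon 1 1 ∧
    (∀ v : Fin 6, Nat.card ↥(ball twoTriangles v 1) = 3 ∧
        Nat.card ↥(twoTriangles.induce (ball twoTriangles v 1)).edgeSet = 3) ∧
    (∀ v : Fin 6, Nat.card ↥(ball hexagon v 1) = 3 ∧
        Nat.card ↥(hexagon.induce (ball hexagon v 1)).edgeSet = 2) := by
  refine ⟨?nonisomorphic, fun t => ⟨⟨regularWLColor 2 t, ?triangles, ?hexagon⟩, ?multisets⟩,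
    ?subgraphs, fun v => ⟨isRegularGraph_twoTriangles.card_ball_one v,
      card_edgeSet_induce_ball_one_twoTriangles v⟩,
    fun v => ⟨isRegularGraph_hexagon.card_ball_one v, card_edgeSet_induce_ball_one_hexagon v⟩⟩
  case nonisomorphic =>
    rintro ⟨f⟩
    exact not_cliqueFree_twoTriangles (cliqueFree_hexagon.comap f.isContained)
  case triangles => exact isRegularGraph_twoTriangles.wlColor_eq t
  case hexagon => exact isRegularGraph_hexagon.wlColor_eq t
  case multisets =>
    rw [isRegularGraph_twoTriangles.graphColorMultiset_eq,
      isRegularGraph_hexagon.graphColorMultiset_eq]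
  case subgraphs =>
    intro hrep
    obtain ⟨w, hw⟩ := exists_card_edgeSet_eq_of_subgraphWLGraphRep_eq hrep 0
    rw [card_edgeSet_induce_ball_one_twoTriangles, card_edgeSet_induce_ball_one_hexagon] at hw
    exact absurd hw (by decide)
end
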